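/- arXiv:2407.21165 — 14 statements merged into one kernel-verified Lean document; each statement's English description precedes it below -/
import Mathlib

section
/- The action of Kˣ on the set of 2-dimensional F-subspaces of K, given by x • W = {x·w : w ∈ W}, has exactly q + 1 orbits. -/
/-!
The multipliers `{x | x * W ⊆ W}` of a subspace `W` form an intermediate field `L`, and the
stabilizer of `W` in `Kˣ` is `Lˣ`. For nonzero `w ∈ W` we have `w * L ⊆ W`, so when `dim W = 2`
either `[L : F] = 2` and `W = w * L`, or `L = F`. As `K` has a unique subfield `E` of degree `2`
over `F`, the subspaces of the first kind form the single orbit of `E`, with stabilizer of order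
`q ^ 2 - 1`, and all other stabilizers have order `q - 1`. Comparing orbit sizes with the total
number `(q ^ n - 1) * (q ^ n - q) / ((q ^ 2 - 1) * (q ^ 2 - q))` of planes in `K`, where
`n = [K : F]` is even, gives `1 + q + q ^ 3 + ⋯ + q ^ (n - 3)` orbits.
-/

open Module MulAction
open scoped Pointwise

section OrbitCounting

variable {G X : Type*} [Group G] [MulAction G X]

lemma ncard_orbit_mul_card_stabilizer (x : X) :
    (orbit G x).ncard * Nat.card (stabilizer G x) = Nat.card G := by
  rw [← index_stabilizer, Subgroup.index_mul_card]

lemma card_mul_add_card_eq_of_card_stabilizer_eq [Finite X] (x₀ : X) {s : ℕ}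
    (hs : ∀ x ∉ orbit G x₀, Nat.card (stabilizer G x) = s) :
    Nat.card X * s + Nat.card G =
      (orbit G x₀).ncard * s + Nat.card (orbitRel.Quotient G X) * Nat.card G := by
  classical
  have := Fintype.ofFinite (orbitRel.Quotient G X)
  let ω₀ : orbitRel.Quotient G X := Quotient.mk'' x₀
  have card_orbit_mul {ω : orbitRel.Quotient G X} (hω : ω ∈ Finset.univ.erase ω₀) :
      Nat.card ω.orbit * s = Nat.card G := by
    induction ω using Quotient.inductionOn' with | h x =>
    have hx : x ∉ orbit G x₀ := fun h => Finset.ne_of_mem_erase hω (Quotient.sound' h)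
    rw [orbitRel.Quotient.orbit_mk, Nat.card_coe_set_eq, ← hs x hx,
      ncard_orbit_mul_card_stabilizer]
  have card_X_mul : Nat.card X * s =
      (orbit G x₀).ncard * s + (Nat.card (orbitRel.Quotient G X) - 1) * Nat.card G := by
    rw [Nat.card_congr (selfEquivSigmaOrbits' G X), Nat.card_sigma,
      ← Finset.add_sum_erase _ _ (Finset.mem_univ ω₀), add_mul, Finset.sum_mul,
      Finset.sum_congr rfl fun _ => card_orbit_mul, Finset.sum_const,
      Finset.card_erase_of_mem (Finset.mem_univ ω₀), Finset.card_univ, smul_eq_mul,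
      ← Nat.card_eq_fintype_card, orbitRel.Quotient.orbit_mk, Nat.card_coe_set_eq]
  have card_quotient_pos : 0 < Nat.card (orbitRel.Quotient G X) :=
    Nat.card_pos_iff.2 ⟨⟨ω₀⟩, inferInstance⟩
  rw [card_X_mul, add_assoc, ← Nat.succ_mul, Nat.succ_eq_add_one,
    Nat.sub_add_cancel card_quotient_pos]

end OrbitCounting

section SubspaceCounting

variable {F V : Type*} [DivisionRing F] [AddCommGroup V] [Module F V] [Finite F] [Finite V]

lemma card_submodule_finrank_eq_mul_prod {k : ℕ} (hk : k ≤ finrank F V) :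
    Nat.card {W : Submodule F V // finrank F W = k} *
        ∏ i : Fin k, (Nat.card F ^ k - Nat.card F ^ (i : ℕ)) =
      ∏ i : Fin k, (Nat.card F ^ finrank F V - Nat.card F ^ (i : ℕ)) := by
  have := Fintype.ofFinite F
  have := Fintype.ofFinite {W : Submodule F V // finrank F W = k}
  let toAmbient : (Σ W : {W : Submodule F V // finrank F W = k},
        {s : Fin k → W.1 // LinearIndependent F s}) →
      {s : Fin k → V // LinearIndependent F s} :=
    fun p => ⟨fun i => p.2.1 i, p.2.2.map' p.1.1.subtype p.1.1.ker_subtype⟩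
  have span_toAmbient (p) : Submodule.span F (Set.range (toAmbient p).1) = p.1.1 := by
    refine Submodule.eq_of_le_of_finrank_eq (Submodule.span_le.2 ?_) ?_
    · rintro _ ⟨i, rfl⟩
      exact (p.2.1 i).2
    · rw [finrank_span_eq_card (toAmbient p).2, Fintype.card_fin, p.1.2]
  have toAmbient_bijective : Function.Bijective toAmbient := by
    constructor
    · rintro ⟨⟨W, hW⟩, s, hs⟩ ⟨⟨W', hW'⟩, s', hs'⟩ h
      obtain rfl : W = W' :=
        (span_toAmbient ⟨⟨W, hW⟩, s, hs⟩).symm.trans (h ▸ span_toAmbient _)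
      obtain rfl : s = s' := funext fun i => Subtype.ext (congrFun (congrArg Subtype.val h) i)
      rfl
    · rintro ⟨s, hs⟩
      exact ⟨⟨⟨Submodule.span F (Set.range s), by
        rw [finrank_span_eq_card hs, Fintype.card_fin]⟩, _, linearIndependent_span hs⟩, rfl⟩
  have card_fiber (W : {W : Submodule F V // finrank F W = k}) :
      Nat.card {s : Fin k → W.1 // LinearIndependent F s} =
        ∏ i : Fin k, (Nat.card F ^ k - Nat.card F ^ (i : ℕ)) := by
    rw [card_linearIndependent W.2.ge, W.2, Nat.card_eq_fintype_card]
  rw [Nat.card_eq_fintype_card (α := F), ← card_linearIndependent hk,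
    ← Nat.card_eq_of_bijective _ toAmbient_bijective, Nat.card_sigma,
    Finset.sum_congr rfl fun W _ => card_fiber W, Finset.sum_const, Finset.card_univ, smul_eq_mul,
    ← Nat.card_eq_fintype_card, ← Nat.card_eq_fintype_card]

end SubspaceCounting

section FiniteFieldExtensions

variable {F K : Type*} [Field F] [Field K] [Algebra F K] [Finite K]

lemma exists_intermediateField_finrank_eq {d : ℕ} (hd : d ∣ finrank F K) :
    ∃ E : IntermediateField F K, finrank F E = d := by
  have : Finite F := Finite.of_injective _ (algebraMap F K).injective
  obtain ⟨p, _⟩ := CharP.exists F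
  have : Fact p.Prime := ⟨CharP.char_is_prime F p⟩
  have : NeZero d := ⟨ne_zero_of_dvd_ne_zero finrank_pos.ne' hd⟩
  have finrank_extension := FiniteField.finrank_extension F p d
  obtain ⟨f⟩ : Nonempty (FiniteField.Extension F p d →ₐ[F] K) :=
    FiniteField.nonempty_algHom_of_finrank_dvd (finrank_extension.symm ▸ hd)
  exact ⟨f.fieldRange, (AlgEquiv.ofInjectiveField f).toLinearEquiv.finrank_eq.symm.trans
    finrank_extension⟩

lemma intermediateField_le_of_finrank_dvd {L E : IntermediateField F K}
    (h : finrank F L ∣ finrank F E) : L ≤ E := by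
  obtain ⟨f⟩ := FiniteField.nonempty_algHom_of_finrank_dvd h
  rw [← (E.val.comp f).fieldRange_of_normal]
  rintro _ ⟨x, rfl⟩
  exact (f x).2

lemma intermediateField_eq_of_finrank_eq {L E : IntermediateField F K}
    (h : finrank F L = finrank F E) : L = E :=
  le_antisymm (intermediateField_le_of_finrank_dvd h.dvd)
    (intermediateField_le_of_finrank_dvd h.symm.dvd)

end FiniteFieldExtensions

section Multipliers

section CommSemiring

variable {R A : Type*} [CommSemiring R] [CommSemiring A] [Algebra R A]

/-- The algebra of multipliers `{x | x * W ⊆ W}` of an `R`-submodule `W` of `A`; its units form the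
stabilizer of `W` in `Aˣ`. -/
def multiplierAlgebra (W : Submodule R A) : Subalgebra R A where
  carrier := {x | ∀ w ∈ W, x * w ∈ W}
  mul_mem' hx hy w hw := by rw [mul_assoc]; exact hx _ (hy w hw)
  add_mem' hx hy w hw := by rw [add_mul]; exact W.add_mem (hx w hw) (hy w hw)
  algebraMap_mem' a w hw := by rw [← Algebra.smul_def]; exact W.smul_mem a hw

lemma multiplierAlgebra_toSubmodule (S : Subalgebra R A) :
    multiplierAlgebra S.toSubmodule = S := by
  ext x
  refine ⟨fun hx => ?_, fun hx w hw => S.mul_mem hx hw⟩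
  simpa using hx 1 S.one_mem

lemma units_smul_le_self_iff {W : Submodule R A} {x : Aˣ} :
    x • W ≤ W ↔ (x : A) ∈ multiplierAlgebra W :=
  Submodule.map_le_iff_le_comap

lemma stabilizer_submodule_eq_units (W : Submodule R A) :
    stabilizer Aˣ W = (multiplierAlgebra W).toSubmonoid.units := by
  ext x
  rw [mem_stabilizer_iff, Submonoid.mem_units_iff, le_antisymm_iff, units_smul_le_self_iff]
  have smul_mono (y : Aˣ) {U V : Submodule R A} (h : U ≤ V) : y • U ≤ y • V := Submodule.map_mono h
  have le_smul_iff : W ≤ x • W ↔ x⁻¹ • W ≤ W :=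
    ⟨fun h => by simpa using smul_mono x⁻¹ h, fun h => by simpa using smul_mono x h⟩
  rw [le_smul_iff, units_smul_le_self_iff]
  rfl

lemma units_smul_multiplierAlgebra_le {W : Submodule R A} {w : Aˣ} (hw : (w : A) ∈ W) :
    w • (multiplierAlgebra W).toSubmodule ≤ W := by
  rintro _ ⟨x, hx, rfl⟩
  simpa [mul_comm, Units.smul_def] using hx w hw

lemma finrank_units_smul (x : Aˣ) (W : Submodule R A) :
    finrank R (x • W : Submodule R A) = finrank R W :=
  (DistribMulAction.toLinearEquiv R A x).finrank_map_eq W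

end CommSemiring

variable {F K : Type*} [Field F] [Field K] [Algebra F K]

/-- The algebra of multipliers of a subspace of an algebraic extension, as an intermediate field. -/
def multiplierField [Algebra.IsAlgebraic F K] (W : Submodule F K) : IntermediateField F K :=
  Subalgebra.IsAlgebraic.toIntermediateField (S := multiplierAlgebra W)
    fun x _ => Algebra.IsAlgebraic.isAlgebraic x

lemma multiplierField_toSubmodule [Algebra.IsAlgebraic F K] (E : IntermediateField F K) :
    multiplierField E.toSubalgebra.toSubmodule = E :=
  IntermediateField.toSubalgebra_injective (multiplierAlgebra_toSubmodule _)

lemma card_stabilizer_submodule [Algebra.IsAlgebraic F K] (W : Submodule F K) :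
    Nat.card (stabilizer Kˣ W) = Nat.card (multiplierField W) - 1 := by
  rw [stabilizer_submodule_eq_units, ← Nat.card_units,
    Nat.card_congr (Submonoid.unitsEquivUnitsType _).toEquiv]
  rfl

lemma finrank_multiplierField_le [FiniteDimensional F K] {W : Submodule F K} (hW : W ≠ ⊥) :
    finrank F (multiplierField W) ≤ finrank F W := by
  obtain ⟨w, hw, hw₀⟩ := Submodule.exists_mem_ne_zero_of_ne_bot hW
  exact (finrank_units_smul (Units.mk0 w hw₀) _).symm.trans_le
    (Submodule.finrank_mono (units_smul_multiplierAlgebra_le hw))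

lemma mem_orbit_of_finrank_multiplierField_eq [FiniteDimensional F K] {W : Submodule F K}
    (hW : W ≠ ⊥) (h : finrank F (multiplierField W) = finrank F W) :
    W ∈ orbit Kˣ (multiplierField W).toSubalgebra.toSubmodule := by
  obtain ⟨w, hw, hw₀⟩ := Submodule.exists_mem_ne_zero_of_ne_bot hW
  exact ⟨Units.mk0 w hw₀, Submodule.eq_of_le_of_finrank_eq (units_smul_multiplierAlgebra_le hw)
    ((finrank_units_smul _ _).trans h)⟩

lemma multiplierField_eq_bot_of_notMem_orbit [Finite K] {E : IntermediateField F K}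
    (hE : finrank F E = 2) {W : Submodule F K} (hW : finrank F W = 2)
    (hWE : W ∉ orbit Kˣ E.toSubalgebra.toSubmodule) : multiplierField W = ⊥ := by
  have hW₀ : W ≠ ⊥ := by rintro rfl; simp at hW
  have finrank_le := finrank_multiplierField_le hW₀
  have finrank_pos : 0 < finrank F (multiplierField W) := finrank_pos
  have finrank_ne_two : finrank F (multiplierField W) ≠ 2 := fun h =>
    hWE (intermediateField_eq_of_finrank_eq (h.trans hE.symm) ▸
      mem_orbit_of_finrank_multiplierField_eq hW₀ (h.trans hW.symm))
  exact IntermediateField.finrank_eq_one_iff.1 (by omega)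

end Multipliers

section Action

variable (F K : Type*) [Field F] [Field K] [Algebra F K]

/-- The `d`-dimensional `F`-subspaces of `K`, with the action of `Kˣ` by multiplication. -/
def subspacesOfFinrank (d : ℕ) : SubMulAction Kˣ (Submodule F K) where
  carrier := {W | finrank F W = d}
  smul_mem' x W hW := (finrank_units_smul x W).trans hW

variable {F K}

lemma card_stabilizer_intermediateField [FiniteDimensional F K] {d : ℕ}
    {E : IntermediateField F K} (hE : finrank F E = d) :
    Nat.card (stabilizer Kˣ (⟨E.toSubalgebra.toSubmodule, hE⟩ : subspacesOfFinrank F K d)) =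
      Nat.card F ^ d - 1 := by
  rw [SubMulAction.stabilizer_of_subMul, card_stabilizer_submodule, multiplierField_toSubmodule,
    natCard_eq_pow_finrank (K := F), hE]

lemma card_stabilizer_of_notMem_orbit [Finite K] {E : IntermediateField F K}
    (hE : finrank F E = 2) {W : subspacesOfFinrank F K 2}
    (hW : W ∉ orbit Kˣ (⟨E.toSubalgebra.toSubmodule, hE⟩ : subspacesOfFinrank F K 2)) :
    Nat.card (stabilizer Kˣ W) = Nat.card F - 1 := by
  have hWE : (W : Submodule F K) ∉ orbit Kˣ E.toSubalgebra.toSubmodule :=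
    fun ⟨x, hx⟩ => hW ⟨x, Subtype.ext hx⟩
  rw [SubMulAction.stabilizer_of_subMul, card_stabilizer_submodule,
    multiplierField_eq_bot_of_notMem_orbit hE W.2 hWE,
    Nat.card_congr (IntermediateField.botEquiv F K).toEquiv]

lemma card_quot_exists_map_mulLeft_eq (d : ℕ) :
    Nat.card (Quot (fun W W' : {W : Submodule F K // finrank F W = d} =>
      ∃ x : Kˣ, Submodule.map (LinearMap.mulLeft F (x : K)) W.1 = W'.1)) =
      Nat.card (orbitRel.Quotient Kˣ (subspacesOfFinrank F K d)) := by
  refine Nat.card_congr (Quot.congrRight fun (W W' : subspacesOfFinrank F K d) => ?_)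
  exact (exists_congr fun _ => Subtype.ext_iff.symm).trans (mem_orbit_symm (G := Kˣ) (a₁ := W'))

end Action

section ClassEquation

lemma mul_sum_odd_pow {R : Type*} [CommRing R] (q : R) (m : ℕ) :
    (q ^ 2 - 1) * ∑ i ∈ Finset.range m, q ^ (2 * i + 1) = q ^ (2 * m + 1) - q := by
  simp only [pow_succ _ (2 * _), pow_mul, ← Finset.sum_mul]
  linear_combination q * mul_geom_sum (q ^ 2) m

lemma eq_one_add_sum_of_class_equation {q m subspaces orbitSize orbits : ℕ} (hq : 1 < q)
    (card_subspaces : subspaces * ((q ^ 2 - 1) * (q ^ 2 - q)) =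
      (q ^ (2 * m + 2) - 1) * (q ^ (2 * m + 2) - q))
    (card_orbit : orbitSize * (q ^ 2 - 1) = q ^ (2 * m + 2) - 1)
    (class_equation : subspaces * (q - 1) + (q ^ (2 * m + 2) - 1) =
      orbitSize * (q - 1) + orbits * (q ^ (2 * m + 2) - 1)) :
    orbits = 1 + ∑ i ∈ Finset.range m, q ^ (2 * i + 1) := by
  have q_le_sq : q ≤ q ^ 2 := Nat.le_self_pow two_ne_zero q
  have q_le_pow : q ≤ q ^ (2 * m + 2) := Nat.le_self_pow (by omega) q
  zify [hq.le, q_le_sq, q_le_pow, hq.le.trans q_le_sq, hq.le.trans q_le_pow]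
    at hq card_subspaces card_orbit class_equation ⊢
  have q_ne_zero : (q : ℤ) ≠ 0 := by omega
  have sq_sub_one_ne_zero : (q : ℤ) ^ 2 - 1 ≠ 0 := (sub_pos.2 (one_lt_pow₀ hq two_ne_zero)).ne'
  have pow_sub_one_ne_zero : (q : ℤ) ^ (2 * m + 2) - 1 ≠ 0 :=
    (sub_pos.2 (one_lt_pow₀ hq (by omega))).ne'
  have cleared : (orbits : ℤ) * (((q : ℤ) ^ 2 - 1) * q * (q ^ (2 * m + 2) - 1)) =
      (1 + ∑ i ∈ Finset.range m, (q : ℤ) ^ (2 * i + 1)) *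
        (((q : ℤ) ^ 2 - 1) * q * (q ^ (2 * m + 2) - 1)) := by
    linear_combination -((q : ℤ) ^ 2 - 1) * q * class_equation + card_subspaces -
      q * (q - 1) * card_orbit - q * (q ^ (2 * m + 2) - 1) * mul_sum_odd_pow (q : ℤ) m
  exact mul_right_cancel₀
    (mul_ne_zero (mul_ne_zero sq_sub_one_ne_zero q_ne_zero) pow_sub_one_ne_zero) cleared

end ClassEquation

theorem stmt_0_general (F K : Type*) [Field F] [Field K] [Algebra F K] [Finite F] {m : ℕ}
    (hK : finrank F K = 2 * m + 2) :
    Nat.card (Quot (fun W W' : {W : Submodule F K // finrank F W = 2} =>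
      ∃ x : Kˣ, Submodule.map (LinearMap.mulLeft F (x : K)) W.1 = W'.1)) =
      1 + ∑ i ∈ Finset.range m, Nat.card F ^ (2 * i + 1) := by
  have : FiniteDimensional F K := .of_finrank_pos (by omega)
  have : Finite K := Module.finite_of_finite F
  obtain ⟨E, hE⟩ := exists_intermediateField_finrank_eq (F := F) (K := K) (d := 2) (by omega)
  let E₀ : subspacesOfFinrank F K 2 := ⟨E.toSubalgebra.toSubmodule, hE⟩
  have card_units : Nat.card Kˣ = Nat.card F ^ (2 * m + 2) - 1 := by
    rw [Nat.card_units, natCard_eq_pow_finrank (K := F), hK]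
  have card_subspaces : Nat.card {W : Submodule F K // finrank F W = 2} *
      ((Nat.card F ^ 2 - 1) * (Nat.card F ^ 2 - Nat.card F)) =
        (Nat.card F ^ (2 * m + 2) - 1) * (Nat.card F ^ (2 * m + 2) - Nat.card F) := by
    simpa [hK, Fin.prod_univ_two] using
      card_submodule_finrank_eq_mul_prod (F := F) (V := K) (k := 2) (by omega)
  have card_orbit_E : (orbit Kˣ E₀).ncard * (Nat.card F ^ 2 - 1) =
      Nat.card F ^ (2 * m + 2) - 1 := by
    rw [← card_units, ← card_stabilizer_intermediateField hE, ncard_orbit_mul_card_stabilizer]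
  have class_equation := card_mul_add_card_eq_of_card_stabilizer_eq E₀
    fun W => card_stabilizer_of_notMem_orbit hE (W := W)
  rw [card_units] at class_equation
  rw [card_quot_exists_map_mulLeft_eq]
  exact eq_one_add_sum_of_class_equation Finite.one_lt_card card_subspaces card_orbit_E
    class_equation

/-- The action of `Kˣ` on the set of 2-dimensional `F`-subspaces of `K`, given by
`x • W = {x·w : w ∈ W}`, has exactly `q + 1` orbits. -/
theorem stmt_0 (q : ℕ) (hodd : Odd q) (F K : Type*) [Field F] [Field K] [Algebra F K]
    [Fintype F] [Fintype K] (hq : Fintype.card F = q)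
    (hK : Module.finrank F K = 4) :
    Nat.card (Quot (fun W W' : {W : Submodule F K // Module.finrank F W = 2} =>
      ∃ x : Kˣ, Submodule.map (LinearMap.mulLeft F (x : K)) W.1 = W'.1)) = q + 1 := by
  simpa [hq, add_comm] using stmt_0_general F K (m := 1) hK
end

section
/- For every y ∈ E \ F, the stabilizer {x ∈ Kˣ : x • W_y = W_y} of the subspace W_y under the action of Kˣ equals Eˣ, i.e. equals {x ∈ Kˣ : x ∈ E}. -/
/-!
A two-dimensional subalgebra containing `y ∉ F` is exactly `W_y = span F {1, y}`, so the question is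
which units `x` stabilize a finite-dimensional subalgebra `S`. If `x • S = S` then `x = x * 1 ∈ S`;
conversely, if `x ∈ S` then `x • S ⊆ S`, and both sides have the same dimension.
-/

open Module

section Submodule

variable {F V : Type*} [DivisionRing F] [AddCommGroup V] [Module F V]

theorem map_eq_of_map_le_of_injective {f : V →ₗ[F] V} (hf : Function.Injective f)
    {p : Submodule F V} [FiniteDimensional F p] (hle : p.map f ≤ p) : p.map f = p :=
  Submodule.eq_of_le_of_finrank_eq hle (p.equivMapOfInjective f hf).finrank_eq.symm

end Submodule

section Subalgebra

variable {F A : Type*} [Field F] [Ring A] [Algebra F A]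

theorem linearIndependent_one_pair_iff [Nontrivial A] {y : A} :
    LinearIndependent F ![1, y] ↔ y ∉ Set.range (algebraMap F A) := by
  simp only [LinearIndependent.pair_iff' one_ne_zero, Set.mem_range, not_exists,
    Algebra.algebraMap_eq_smul_one, ne_eq]

theorem finrank_span_one_pair {y : A} (hy : y ∉ Set.range (algebraMap F A)) :
    finrank F (Submodule.span F {1, y}) = 2 := by
  have : Nontrivial A := nontrivial_of_ne y 0 fun h => hy ⟨0, by rw [map_zero, h]⟩
  have hspan := finrank_span_eq_card (linearIndependent_one_pair_iff.mpr hy)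
  rwa [Matrix.range_cons_cons_empty, Fintype.card_fin] at hspan

theorem span_one_pair_eq_toSubmodule {S : Subalgebra F A} (hS : finrank F S = 2) {y : A}
    (hyS : y ∈ S) (hyF : y ∉ Set.range (algebraMap F A)) :
    Submodule.span F {1, y} = Subalgebra.toSubmodule S := by
  have : FiniteDimensional F (Subalgebra.toSubmodule S) :=
    FiniteDimensional.of_finrank_pos (hS ▸ two_pos)
  have hle : Submodule.span F {1, y} ≤ Subalgebra.toSubmodule S :=
    Submodule.span_le.mpr (Set.pair_subset S.one_mem hyS)
  exact Submodule.eq_of_le_of_finrank_eq hle ((finrank_span_one_pair hyF).trans hS.symm)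

theorem map_mulLeft_toSubmodule_eq_iff {S : Subalgebra F A} [FiniteDimensional F S] {x : A}
    (hx : IsLeftRegular x) :
    (Subalgebra.toSubmodule S).map (LinearMap.mulLeft F x) = Subalgebra.toSubmodule S ↔
      x ∈ S := by
  constructor
  · intro hmap
    rw [← Subalgebra.mem_toSubmodule, ← hmap]
    exact ⟨1, S.one_mem, mul_one x⟩
  · intro hxS
    have : FiniteDimensional F (Subalgebra.toSubmodule S) := ‹FiniteDimensional F S›
    exact map_eq_of_map_le_of_injective hx
      (Submodule.map_le_iff_le_comap.mpr fun _ hs => S.mul_mem hxS hs)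

theorem stmt_1_general {S : Subalgebra F A} (hS : finrank F S = 2) {y : A} (hyS : y ∈ S)
    (hyF : y ∉ Set.range (algebraMap F A)) :
    {x : Aˣ | (Submodule.span F {1, y}).map (LinearMap.mulLeft F (x : A)) =
      Submodule.span F {1, y}} = {x : Aˣ | (x : A) ∈ S} := by
  have : FiniteDimensional F S := FiniteDimensional.of_finrank_pos (hS ▸ two_pos)
  rw [span_one_pair_eq_toSubmodule hS hyS hyF]
  exact Set.ext fun x => map_mulLeft_toSubmodule_eq_iff x.isUnit.isRegular.left

end Subalgebra

/-- For every `y ∈ E \ F`, the stabilizer of `W_y = span F {1, y}` under the action of `Kˣ`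
equals `Eˣ`, i.e. equals `{x ∈ Kˣ : x ∈ E}`. -/
theorem stmt_1 (q : ℕ) (hodd : Odd q) (F K : Type*) [Field F] [Field K] [Algebra F K]
    [Fintype F] [Fintype K] (hq : Fintype.card F = q)
    (hK : Module.finrank F K = 4)
    (E : IntermediateField F K) (hE : Module.finrank F E = 2)
    (y : K) (hyE : y ∈ E) (hyF : y ∉ Set.range (algebraMap F K)) :
    {x : Kˣ | Submodule.map (LinearMap.mulLeft F (x : K)) (Submodule.span F {1, y}) =
      Submodule.span F {1, y}} = {x : Kˣ | (x : K) ∈ E} :=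
  stmt_1_general (S := E.toSubalgebra) hE hyE hyF
end

section
/- For every y ∈ K \ E, the stabilizer {x ∈ Kˣ : x • W_y = W_y} of the subspace W_y under the action of Kˣ equals Fˣ, i.e. equals {x ∈ Kˣ : x ∈ F}. -/
/-!
If `x` stabilizes `W = span F {1, y}`, then `x = x * 1 = a + b * y` and `x * y` both lie in `W`,
hence so does `b * y ^ 2`. If `b ≠ 0`, then `y` is a root of a monic quadratic over `F`, so its
degree over `F` divides `2`. A finite field `F` has at most one extension of degree `2` inside `K`,
and all elements of degree dividing `2` lie in it: they are roots of `X ^ q ^ 2 - X`, which already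
splits there. Thus `y ∉ E` forces `b = 0`, that is, `x ∈ F`.
-/

open Polynomial Submodule

section Stabilizer

variable {F A : Type*} [Field F] [Ring A] [Algebra F A]

theorem map_mulLeft_algebraMap {a : F} (ha : a ≠ 0) (W : Submodule F A) :
    W.map (LinearMap.mulLeft F (algebraMap F A a)) = W := by
  have mulLeft_eq_smul : LinearMap.mulLeft F (algebraMap F A a) = a • LinearMap.id := by
    ext z
    simp [Algebra.smul_def]
  rw [mulLeft_eq_smul, Submodule.map_smul _ _ _ ha, Submodule.map_id]

theorem mem_range_algebraMap_of_mul_mem_span_one_pair {x y : A}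
    (hy : y ^ 2 ∉ span F {1, y}) (hx : x ∈ span F {1, y}) (hxy : x * y ∈ span F {1, y}) :
    x ∈ Set.range (algebraMap F A) := by
  obtain ⟨a, b, rfl⟩ := mem_span_pair.1 hx
  have hay : a • y ∈ span F {1, y} := smul_mem _ a (subset_span (by simp))
  have hby : b • y ^ 2 ∈ span F {1, y} := by
    simpa [add_mul, sq] using sub_mem hxy hay
  have hb : b = 0 := by
    by_contra hb
    exact hy ((smul_mem_iff _ hb).1 hby)
  exact ⟨a, by simp [hb, Algebra.algebraMap_eq_smul_one]⟩

theorem map_mulLeft_span_one_pair_eq_iff {y : A} (hy : y ^ 2 ∉ span F {1, y}) (x : Aˣ) :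
    (span F {1, y}).map (LinearMap.mulLeft F (x : A)) = span F {1, y} ↔
      (x : A) ∈ Set.range (algebraMap F A) := by
  constructor
  · intro hstab
    have mul_mem : ∀ w ∈ span F {1, y}, (x : A) * w ∈ span F {1, y} := fun w hw ↦
      hstab.le (mem_map_of_mem (f := LinearMap.mulLeft F (x : A)) hw)
    have hx : (x : A) ∈ span F {1, y} := by simpa using mul_mem 1 (subset_span (by simp))
    exact mem_range_algebraMap_of_mul_mem_span_one_pair hy hx (mul_mem y (subset_span (by simp)))
  · rintro ⟨a, ha⟩
    have : Nontrivial A := nontrivial_of_ne _ _ fun h : y ^ 2 = 0 ↦ hy (h ▸ zero_mem _)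
    have ha0 : a ≠ 0 := by
      rintro rfl
      exact x.ne_zero (by simpa using ha.symm)
    rw [← ha, map_mulLeft_algebraMap ha0]

end Stabilizer

theorem exists_monic_natDegree_eq_two_of_sq_mem_span {R A : Type*} [CommRing R] [Nontrivial R]
    [Ring A] [Algebra R A] {y : A} (hy : y ^ 2 ∈ span R {1, y}) :
    ∃ p : R[X], p.Monic ∧ p.natDegree = 2 ∧ aeval y p = 0 := by
  obtain ⟨c, d, hcd⟩ := mem_span_pair.1 hy
  refine ⟨X ^ 2 - (C d * X + C c), by monicity!, by compute_degree!, ?_⟩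
  simp [← hcd, Algebra.smul_def, add_comm]

section FiniteField

variable {F K : Type*} [Field F] [Field K] [Algebra F K]

theorem mem_range_algebraMap_of_pow_natCard_eq_self [Finite F] {y : K}
    (hy : y ^ Nat.card F = y) : y ∈ Set.range (algebraMap F K) := by
  have hne : (X ^ Nat.card F - X : F[X]) ≠ 0 :=
    FiniteField.X_pow_card_sub_X_ne_zero F Finite.one_lt_card
  exact splits_X_pow_nat_card_sub_X.mem_range_of_isRoot hne (by simp [hy])

theorem pow_natCard_pow_eq_self_of_natDegree_minpoly_dvd [Finite F] {y : K} (hy : IsIntegral F y)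
    {n : ℕ} (hn : (minpoly F y).natDegree ∣ n) : y ^ Nat.card F ^ n = y := by
  have hdvd : minpoly F y ∣ X ^ Nat.card F ^ n - X :=
    (minpoly.irreducible hy).natDegree_dvd_iff_dvd_X_pow_card_pow_sub_X.1 hn
  simpa [sub_eq_zero] using aeval_eq_zero_of_dvd_aeval_eq_zero hdvd (minpoly.aeval F y)

theorem mem_of_natDegree_minpoly_dvd_finrank [Finite F] (E : IntermediateField F K)
    [FiniteDimensional F E] {y : K} (hy : IsIntegral F y)
    (hdvd : (minpoly F y).natDegree ∣ Module.finrank F E) : y ∈ E := by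
  have : Finite E := Module.finite_of_finite F
  have hpow : y ^ Nat.card E = y := by
    rw [Module.natCard_eq_pow_finrank (K := F)]
    exact pow_natCard_pow_eq_self_of_natDegree_minpoly_dvd hy hdvd
  simpa using mem_range_algebraMap_of_pow_natCard_eq_self (F := E) hpow

theorem mem_of_sq_mem_span_one_pair [Finite F] {E : IntermediateField F K}
    (hE : Module.finrank F E = 2) {y : K} (hy : y ^ 2 ∈ span F {1, y}) : y ∈ E := by
  have : FiniteDimensional F E := .of_finrank_pos (by lia)
  obtain ⟨p, hp, hdeg, hroot⟩ := exists_monic_natDegree_eq_two_of_sq_mem_span hy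
  have hint : IsIntegral F y := ⟨p, hp, hroot⟩
  have hpos : 0 < (minpoly F y).natDegree := minpoly.natDegree_pos hint
  have hle : (minpoly F y).natDegree ≤ 2 :=
    hdeg ▸ natDegree_le_of_dvd (minpoly.dvd F y hroot) hp.ne_zero
  have hdvd : (minpoly F y).natDegree ∣ 2 := by
    interval_cases (minpoly F y).natDegree <;> norm_num
  exact mem_of_natDegree_minpoly_dvd_finrank E hint (hE ▸ hdvd)

end FiniteField

theorem stmt_2_general {F K : Type*} [Field F] [Field K] [Algebra F K] [Finite F]
    {E : IntermediateField F K} (hE : Module.finrank F E = 2) {y : K} (hyE : y ∉ E) :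
    {x : Kˣ | Submodule.map (LinearMap.mulLeft F (x : K)) (Submodule.span F {1, y}) =
      Submodule.span F {1, y}} = {x : Kˣ | (x : K) ∈ Set.range (algebraMap F K)} :=
  Set.ext fun x ↦
    map_mulLeft_span_one_pair_eq_iff (fun hy ↦ hyE (mem_of_sq_mem_span_one_pair hE hy)) x

/-- For every `y ∈ K \ E`, the stabilizer of `W_y = span F {1, y}` under the action of `Kˣ`
equals `Fˣ`, i.e. equals `{x ∈ Kˣ : x ∈ F}`. -/
theorem stmt_2 (q : ℕ) (hodd : Odd q) (F K : Type*) [Field F] [Field K] [Algebra F K]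
    [Fintype F] [Fintype K] (hq : Fintype.card F = q)
    (hK : Module.finrank F K = 4)
    (E : IntermediateField F K) (hE : Module.finrank F E = 2)
    (y : K) (hyE : y ∉ E) :
    {x : Kˣ | Submodule.map (LinearMap.mulLeft F (x : K)) (Submodule.span F {1, y}) =
      Submodule.span F {1, y}} = {x : Kˣ | (x : K) ∈ Set.range (algebraMap F K)} :=
  stmt_2_general hE hyE
end

section
/- For y, y' ∈ K \ F, the subspaces W_y and W_{y'} lie in the same Kˣ-orbit (i.e. there exists x ∈ Kˣ with x • W_y = W_{y'}) if and only if there exist p, r, s, t ∈ F with p·t − r·s ≠ 0 such that y'·(s·y + t) = p·y + r (the element s·y + t being automatically nonzero since y ∉ F). -/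
/-!
Two finite families of the same length in a vector space over a field have the same span exactly
when an invertible matrix carries one to the other, linearly independent or not. Applied to
`x • W_y = span {x, x * y}` and `W_{y'} = span {1, y'}`, this yields an invertible matrix
`(t, s; r, p)` over `F` with `x * (s * y + t) = 1` and `x * (p * y + r) = y'`. As `s * y + t` and
`p * y + r` commute, eliminating `x` leaves `y' * (s * y + t) = p * y + r`; conversely,
invertibility of the matrix keeps `s * y + t` from vanishing, and `x` is its inverse.
-/

section VectorSpace

variable {k V W : Type*} [AddCommGroup V] [AddCommGroup W]

theorem exists_linearEquiv_comp_eq_of_range_eq [DivisionRing k] [Module k V] [Module k W]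
    [FiniteDimensional k V] {f g : V →ₗ[k] W} (h : f.range = g.range) :
    ∃ e : V ≃ₗ[k] V, f ∘ₗ e = g := by
  obtain ⟨C, hC⟩ := f.ker.exists_isCompl
  obtain ⟨D, hD⟩ := g.ker.exists_isCompl
  have finrank_ker_eq : Module.finrank k g.ker = Module.finrank k f.ker := by
    have hf := f.finrank_range_add_finrank_ker
    have hg := g.finrank_range_add_finrank_ker
    rw [h] at hf
    lia
  let kerEquiv : g.ker ≃ₗ[k] f.ker := LinearEquiv.ofFinrankEq _ _ finrank_ker_eq
  let complEquiv : D ≃ₗ[k] C := g.kerComplementEquivRange hD.symm ≪≫ₗ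
    LinearEquiv.ofEq _ _ h.symm ≪≫ₗ (f.kerComplementEquivRange hC.symm).symm
  have map_complEquiv (d : D) : f (complEquiv d) = g d :=
    congrArg Subtype.val ((f.kerComplementEquivRange hC.symm).apply_symm_apply
      (LinearEquiv.ofEq _ _ h.symm (g.kerComplementEquivRange hD.symm d)))
  let splitting := g.ker.prodEquivOfIsCompl D hD
  refine ⟨splitting.symm ≪≫ₗ kerEquiv.prodCongr complEquiv ≪≫ₗ f.ker.prodEquivOfIsCompl C hC, ?_⟩
  ext v
  obtain ⟨⟨n, d⟩, rfl⟩ := splitting.surjective v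
  simp [splitting, map_complEquiv]

variable [Field k] [Module k V]

theorem span_range_eq_span_range_iff_exists_det_ne_zero {ι : Type*} [Fintype ι] [DecidableEq ι]
    {v w : ι → V} :
    Submodule.span k (Set.range v) = Submodule.span k (Set.range w) ↔
      ∃ A : Matrix ι ι k, A.det ≠ 0 ∧ ∀ i, ∑ j, A i j • v j = w i := by
  rw [← Fintype.range_linearCombination, ← Fintype.range_linearCombination]
  constructor
  · intro h
    obtain ⟨e, he⟩ := exists_linearEquiv_comp_eq_of_range_eq h
    refine ⟨(LinearMap.toMatrix' (e : (ι → k) →ₗ[k] ι → k)).transpose, ?_, fun i ↦ ?_⟩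
    · rw [Matrix.det_transpose, LinearMap.det_toMatrix']
      exact e.isUnit_det'.ne_zero
    · simpa [LinearMap.toMatrix'_apply, Fintype.linearCombination_apply] using
        LinearMap.congr_fun he (Pi.single i 1)
  · rintro ⟨A, hA, hw⟩
    have comp_vecMul : Fintype.linearCombination k v ∘ₗ A.vecMulLinear =
        Fintype.linearCombination k w := by
      ext i
      simp [Fintype.linearCombination_apply, hw]
    have vecMul_surjective : Function.Surjective A.vecMulLinear :=
      Matrix.vecMul_surjective_iff_isUnit.mpr (A.isUnit_iff_isUnit_det.mpr hA.isUnit)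
    rw [← comp_vecMul, LinearMap.range_comp_of_range_eq_top _
      (LinearMap.range_eq_top.mpr vecMul_surjective)]

theorem span_pair_eq_span_pair_iff_exists_det_ne_zero {a b c d : V} :
    Submodule.span k {a, b} = Submodule.span k {c, d} ↔
      ∃ p r s t : k, p * t - r * s ≠ 0 ∧ s • b + t • a = c ∧ p • b + r • a = d := by
  rw [← Matrix.range_cons_cons_empty a b ![], ← Matrix.range_cons_cons_empty c d ![],
    span_range_eq_span_range_iff_exists_det_ne_zero]
  constructor
  · rintro ⟨A, hA, h⟩
    rw [Matrix.det_fin_two] at hA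
    refine ⟨A 1 1, A 1 0, A 0 1, A 0 0, by convert hA using 1; ring, ?_, ?_⟩
    · simpa [add_comm] using h 0
    · simpa [add_comm] using h 1
  · rintro ⟨p, r, s, t, hdet, rfl, rfl⟩
    refine ⟨!![t, s; r, p], by rw [Matrix.det_fin_two_of]; convert hdet using 1; ring, ?_⟩
    simp [Fin.forall_fin_two, add_comm]

end VectorSpace

theorem exists_unit_mul_eq_one_and_mul_eq_iff {G₀ : Type*} [GroupWithZero G₀] {u v z : G₀}
    (huv : Commute u v) (hne : u ≠ 0 ∨ v ≠ 0) :
    (∃ x : G₀ˣ, x * u = 1 ∧ x * v = z) ↔ z * u = v := by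
  constructor
  · rintro ⟨x, hxu, rfl⟩
    rw [mul_assoc, ← huv.eq, ← mul_assoc, hxu, one_mul]
  · intro hzu
    have hu : u ≠ 0 := by
      rintro rfl
      exact hne.elim (absurd rfl) (absurd (by rw [← hzu, mul_zero]))
    refine ⟨(Units.mk0 u hu)⁻¹, by simp [hu], ?_⟩
    rw [Units.val_inv_eq_inv_val, Units.val_mk0, huv.inv_left₀.eq, ← hzu, mul_inv_cancel_right₀ hu]

section Algebra

variable {F K : Type*}

theorem commute_algebraMap_mul_add_algebraMap [CommSemiring F] [Semiring K] [Algebra F K] (y : K)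
    (p r s t : F) :
    Commute (algebraMap F K s * y + algebraMap F K t)
      (algebraMap F K p * y + algebraMap F K r) := by
  have commute_y : Commute (algebraMap F K s * y + algebraMap F K t) y :=
    ((Algebra.commute_algebraMap_left s y).mul_left (.refl y)).add_left
      (Algebra.commute_algebraMap_left t y)
  exact ((Algebra.commute_algebraMap_right p _).mul_right commute_y).add_right
    (Algebra.commute_algebraMap_right r _)

theorem algebraMap_mul_add_algebraMap_ne_zero_or [CommRing F] [Ring K] [Algebra F K]
    [FaithfulSMul F K] (y : K) {p r s t : F} (hdet : p * t - r * s ≠ 0) :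
    algebraMap F K s * y + algebraMap F K t ≠ 0 ∨
      algebraMap F K p * y + algebraMap F K r ≠ 0 := by
  by_contra! h
  have algebraMap_det : algebraMap F K (p * t - r * s) =
      p • (algebraMap F K s * y + algebraMap F K t) -
        s • (algebraMap F K p * y + algebraMap F K r) := by
    simp only [Algebra.algebraMap_eq_smul_one, smul_mul_assoc, one_mul]
    module
  rw [h.1, h.2, smul_zero, smul_zero, sub_zero, FaithfulSMul.algebraMap_eq_zero_iff]
    at algebraMap_det
  exact hdet algebraMap_det

variable [Field F]

theorem map_mulLeft_span_one_pair_eq_iff_s3 [Ring K] [Algebra F K] {x y z : K} :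
    (Submodule.span F {1, y}).map (LinearMap.mulLeft F x) = Submodule.span F {1, z} ↔
      ∃ p r s t : F, p * t - r * s ≠ 0 ∧
        x * (algebraMap F K s * y + algebraMap F K t) = 1 ∧
        x * (algebraMap F K p * y + algebraMap F K r) = z := by
  simp only [Submodule.map_span, Set.image_pair, LinearMap.mulLeft_apply, mul_one,
    span_pair_eq_span_pair_iff_exists_det_ne_zero, mul_add, ← Algebra.smul_def, mul_smul_comm,
    ← Algebra.commutes _ x]

theorem stmt_3_general [DivisionRing K] [Algebra F K] (y y' : K) :
    (∃ x : Kˣ, Submodule.map (LinearMap.mulLeft F (x : K)) (Submodule.span F {1, y}) =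
        Submodule.span F {1, y'}) ↔
      ∃ p r s t : F, p * t - r * s ≠ 0 ∧
        y' * (algebraMap F K s * y + algebraMap F K t) =
          algebraMap F K p * y + algebraMap F K r := by
  have eliminate_unit (p r s t : F) (hdet : p * t - r * s ≠ 0) :
      (∃ x : Kˣ, x * (algebraMap F K s * y + algebraMap F K t) = 1 ∧
        x * (algebraMap F K p * y + algebraMap F K r) = y') ↔
      y' * (algebraMap F K s * y + algebraMap F K t) = algebraMap F K p * y + algebraMap F K r :=
    exists_unit_mul_eq_one_and_mul_eq_iff
      (commute_algebraMap_mul_add_algebraMap y p r s t)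
      (algebraMap_mul_add_algebraMap_ne_zero_or y hdet)
  simp only [map_mulLeft_span_one_pair_eq_iff_s3]
  constructor
  · rintro ⟨x, p, r, s, t, hdet, hx⟩
    exact ⟨p, r, s, t, hdet, (eliminate_unit p r s t hdet).mp ⟨x, hx⟩⟩
  · rintro ⟨p, r, s, t, hdet, hy'⟩
    obtain ⟨x, hx⟩ := (eliminate_unit p r s t hdet).mpr hy'
    exact ⟨x, p, r, s, t, hdet, hx⟩

end Algebra

/-- For `y, y' ∈ K \ F`, the subspaces `W_y` and `W_{y'}` lie in the same `Kˣ`-orbit iff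
there exist `p, r, s, t ∈ F` with `p·t − r·s ≠ 0` such that `y'·(s·y + t) = p·y + r`. -/
theorem stmt_3 (q : ℕ) (hodd : Odd q) (F K : Type*) [Field F] [Field K] [Algebra F K]
    [Fintype F] [Fintype K] (hq : Fintype.card F = q)
    (hK : Module.finrank F K = 4)
    (y y' : K) (hy : y ∉ Set.range (algebraMap F K)) (hy' : y' ∉ Set.range (algebraMap F K)) :
    (∃ x : Kˣ, Submodule.map (LinearMap.mulLeft F (x : K)) (Submodule.span F {1, y}) =
        Submodule.span F {1, y'}) ↔
      ∃ p r s t : F, p * t - r * s ≠ 0 ∧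
        y' * (algebraMap F K s * y + algebraMap F K t) = algebraMap F K p * y + algebraMap F K r :=
  stmt_3_general y y'
end

section
/- For every w ∈ Fq there exist u, v ∈ Fq such that u²·(w·(1 + 2a·w)) − u·v·(1 − w²·(3a² + b²α)) − v²·(2a + w·(3a² + b²α)) + (1 + 2a·w + (a² − b²α)·w²) = 0. -/
/-!
With `A = 1 + 2aw` and `C = 2a + w(3a² + b²α)`, the quadratic part of the equation is the product
`(wu - v)(Au + Cv)`. The determinant of its two linear factors is
`wC + A = (1 + 2aw)² - (a² - b²α)w²`, a value of the anisotropic form `x² - (a² - b²α)y²` at a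
nonzero vector. So the factors can be given any prescribed values, for example `1` and the required
product.
-/

section BinaryForms

variable {K : Type*} [Field K]

lemma sq_sub_mul_sq_eq_zero_iff {d : K} (hd : ¬IsSquare d) {x y : K} :
    x ^ 2 - d * y ^ 2 = 0 ↔ x = 0 ∧ y = 0 := by
  refine ⟨fun h ↦ ?_, by rintro ⟨rfl, rfl⟩; ring⟩
  have hy : y = 0 := by
    by_contra hy
    have hd_eq : d = x ^ 2 / y ^ 2 :=
      eq_div_of_mul_eq (pow_ne_zero 2 hy) (sub_eq_zero.mp h).symm
    exact hd (hd_eq ▸ (IsSquare.sq x).div (IsSquare.sq y))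
  subst hy
  exact ⟨by simpa using h, rfl⟩

lemma exists_linear_eq_and_linear_eq {p q r s : K} (hdet : p * s - q * r ≠ 0) (m n : K) :
    ∃ u v : K, p * u + q * v = m ∧ r * u + s * v = n := by
  have h_unit : IsUnit !![p, q; r, s] := by
    rwa [Matrix.isUnit_iff_isUnit_det, Matrix.det_fin_two_of, isUnit_iff_ne_zero]
  obtain ⟨x, hx⟩ := Matrix.mulVec_surjective_iff_isUnit.mpr h_unit ![m, n]
  exact ⟨x 0, x 1, by simpa [Matrix.mulVec, dotProduct] using congrFun hx 0,
    by simpa [Matrix.mulVec, dotProduct] using congrFun hx 1⟩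

lemma exists_linear_mul_linear_eq {p q r s : K} (hdet : p * s - q * r ≠ 0) (t : K) :
    ∃ u v : K, (p * u + q * v) * (r * u + s * v) = t := by
  obtain ⟨u, v, h_first, h_second⟩ := exists_linear_eq_and_linear_eq hdet 1 t
  exact ⟨u, v, by rw [h_first, h_second, one_mul]⟩

end BinaryForms

theorem stmt_4_general {K : Type*} [Field K] {a b α : K} (hab : ¬IsSquare (a ^ 2 - b ^ 2 * α))
    (w t : K) :
    ∃ u v : K,
      u ^ 2 * (w * (1 + 2 * a * w)) - u * v * (1 - w ^ 2 * (3 * a ^ 2 + b ^ 2 * α)) -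
          v ^ 2 * (2 * a + w * (3 * a ^ 2 + b ^ 2 * α)) + t = 0 := by
  have h_norm : (1 + 2 * a * w) ^ 2 - (a ^ 2 - b ^ 2 * α) * w ^ 2 ≠ 0 := by
    rw [Ne, sq_sub_mul_sq_eq_zero_iff hab]
    rintro ⟨h, rfl⟩
    simp at h
  have hdet : w * (2 * a + w * (3 * a ^ 2 + b ^ 2 * α)) - (-1) * (1 + 2 * a * w) ≠ 0 := by
    convert h_norm using 1
    ring
  obtain ⟨u, v, huv⟩ := exists_linear_mul_linear_eq hdet (-t)
  exact ⟨u, v, by linear_combination huv⟩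

/-- For every `w ∈ Fq` there exist `u, v ∈ Fq` such that
`u²·(w·(1 + 2a·w)) − u·v·(1 − w²·(3a² + b²α)) − v²·(2a + w·(3a² + b²α))
  + (1 + 2a·w + (a² − b²α)·w²) = 0`. -/
theorem stmt_4 (q : ℕ) (hodd : Odd q) (Fq : Type*) [Field Fq] [Fintype Fq]
    (hq : Fintype.card Fq = q)
    (a b α : Fq) (hα : ¬∃ x : Fq, x ^ 2 = α)
    (hab : ¬∃ x : Fq, x ^ 2 = a ^ 2 - b ^ 2 * α) :
    ∀ w : Fq, ∃ u v : Fq,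
      u ^ 2 * (w * (1 + 2 * a * w)) - u * v * (1 - w ^ 2 * (3 * a ^ 2 + b ^ 2 * α)) -
          v ^ 2 * (2 * a + w * (3 * a ^ 2 + b ^ 2 * α)) +
          (1 + 2 * a * w + (a ^ 2 - b ^ 2 * α) * w ^ 2) = 0 := by
  have hab_not_square : ¬IsSquare (a ^ 2 - b ^ 2 * α) := fun ⟨x, hx⟩ ↦ hab ⟨x, by rw [hx, sq]⟩
  exact fun w ↦ stmt_4_general hab_not_square w _
end

section
/- For all X, Y ∈ Fq with Y ≠ 0, there exist u, v ∈ Fq such that u²·X + u·v·(2a·X + Y) + v²·(2a·Y + X·(a² − b²α)) − Y = 0. -/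
/-!
The left-hand side is a binary quadratic form in `(u, v)` whose discriminant is the value
`(Y - 2aX)² - N(2X)²`, with `N = a² - b²α`, of the norm form of `Fq(√N)`. As `N` is not a square,
this norm form is anisotropic, so the discriminant is nonzero. A binary quadratic form of nonzero
discriminant over a finite field of odd characteristic represents every element: complete the
square and count squares.
-/

theorem discrim_eq_sq_sub_mul_sq {R : Type*} [CommRing R] (a N X Y : R) :
    discrim X (2 * a * X + Y) (2 * a * Y + X * N) = (Y - 2 * a * X) ^ 2 - N * (2 * X) ^ 2 := by
  rw [discrim]
  ring

section Field

variable {F : Type*} [Field F]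

theorem sq_sub_mul_sq_ne_zero_of_not_isSquare {N : F} (hN : ¬IsSquare N) {x y : F}
    (hxy : x ≠ 0 ∨ y ≠ 0) : x ^ 2 - N * y ^ 2 ≠ 0 := by
  intro h
  by_cases hy : y = 0
  · simp_all
  · refine hN (isSquare_iff_exists_sq N |>.mpr ⟨x / y, ?_⟩)
    field_simp
    linear_combination -h

theorem discrim_ne_zero_of_not_isSquare (h2 : (2 : F) ≠ 0) (a : F) {N X Y : F}
    (hN : ¬IsSquare N) (hXY : X ≠ 0 ∨ Y ≠ 0) :
    discrim X (2 * a * X + Y) (2 * a * Y + X * N) ≠ 0 := by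
  rw [discrim_eq_sq_sub_mul_sq]
  apply sq_sub_mul_sq_ne_zero_of_not_isSquare hN
  by_cases hX : X = 0
  · simp_all
  · exact .inr (mul_ne_zero h2 hX)

end Field

section FiniteField

variable {F : Type*} [Field F] [Finite F]

open Polynomial in
theorem exists_sq_sub_mul_sq_eq (hF : ringChar F ≠ 2) {D : F} (hD : D ≠ 0) (c : F) :
    ∃ s v : F, s ^ 2 - D * v ^ 2 = c := by
  have := Fintype.ofFinite F
  have hf : (X ^ 2 - C c : F[X]).degree = 2 := degree_X_pow_sub_C two_pos c
  have hg : (C (-D) * X ^ 2 : F[X]).degree = 2 := degree_C_mul_X_pow 2 (neg_ne_zero.mpr hD)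
  obtain ⟨s, v, hsv⟩ := FiniteField.exists_root_sum_quadratic hf hg
    (FiniteField.odd_card_of_char_ne_two hF)
  simp only [eval_sub, eval_mul, eval_pow, eval_X, eval_C] at hsv
  exact ⟨s, v, by linear_combination hsv⟩

theorem exists_binary_quadratic_eq_of_discrim_ne_zero (hF : ringChar F ≠ 2) {A B C : F}
    (hD : discrim A B C ≠ 0) (c : F) :
    ∃ u v : F, A * u ^ 2 + B * (u * v) + C * v ^ 2 = c := by
  by_cases hA : A = 0
  · have hB : B ≠ 0 := by
      rintro rfl
      simp [discrim, hA] at hD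
    exact ⟨(c - C) / B, 1, by rw [hA]; field_simp; ring⟩
  · have h2 : (2 : F) ≠ 0 := Ring.two_ne_zero hF
    obtain ⟨s, v, hsv⟩ := exists_sq_sub_mul_sq_eq hF hD (4 * A * c)
    -- `4A(Au² + Buv + Cv²) = (2Au + Bv)² - (B² - 4AC)v²`, so solve `2Au + Bv = s` for `u`.
    obtain ⟨u, rfl⟩ : ∃ u, 2 * A * u + B * v = s := ⟨(s - B * v) / (2 * A), by field_simp; ring⟩
    refine ⟨u, v, mul_left_cancel₀ (mul_ne_zero (mul_ne_zero h2 h2) hA) ?_⟩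
    rw [discrim] at hsv
    linear_combination hsv

theorem stmt_5_general (a : F) {N : F} (hN : ¬IsSquare N) {X Y : F} (hXY : X ≠ 0 ∨ Y ≠ 0)
    (c : F) :
    ∃ u v : F, u ^ 2 * X + u * v * (2 * a * X + Y) + v ^ 2 * (2 * a * Y + X * N) = c := by
  have hF : ringChar F ≠ 2 := fun h => hN (FiniteField.isSquare_of_char_two h N)
  have hD := discrim_ne_zero_of_not_isSquare (Ring.two_ne_zero hF) a hN hXY
  obtain ⟨u, v, huv⟩ := exists_binary_quadratic_eq_of_discrim_ne_zero hF hD c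
  exact ⟨u, v, by linear_combination huv⟩

end FiniteField

/-- For all `X, Y ∈ Fq` with `Y ≠ 0`, there exist `u, v ∈ Fq` such that
`u²·X + u·v·(2a·X + Y) + v²·(2a·Y + X·(a² − b²α)) − Y = 0`. -/
theorem stmt_5 (q : ℕ) (hodd : Odd q) (Fq : Type*) [Field Fq] [Fintype Fq]
    (hq : Fintype.card Fq = q)
    (a b α : Fq) (hα : ¬∃ x : Fq, x ^ 2 = α)
    (hab : ¬∃ x : Fq, x ^ 2 = a ^ 2 - b ^ 2 * α) :
    ∀ X Y : Fq, Y ≠ 0 → ∃ u v : Fq,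
      u ^ 2 * X + u * v * (2 * a * X + Y) + v ^ 2 * (2 * a * Y + X * (a ^ 2 - b ^ 2 * α)) - Y
        = 0 := by
  have hN : ¬IsSquare (a ^ 2 - b ^ 2 * α) := by
    simpa only [isSquare_iff_exists_sq, eq_comm] using hab
  intro X Y hY
  simpa only [sub_eq_zero] using stmt_5_general a hN (.inr hY) Y
end

section
/- Let X, Y ∈ Fq with Y ≠ 0. If (u, v) and (u', v') are pairs in Fq × Fq such that u²·X + u·v·(2a·X + Y) + v²·(2a·Y + X·(a² − b²α)) − Y = 0 and u'²·X + u'·v'·(2a·X + Y) + v'²·(2a·Y + X·(a² − b²α)) − Y = 0, then C = 0, where C = u² − u'² + u·v·u'² − u²·u'·v' + 2a·(v²·u'² − u²·v'²) + 2a·(u·v − u'·v') + (3a² + b²α)·(u'·v'·v² − u·v·v'²) + (v² − v'²)·(a² − b²α). -/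
/-!
The equation for `(u, v)` is linear in `(X, Y)`: it reads `X * N + Y * M = 0`, where
`N = u² + 2auv + (a² - b²α)v²` is the norm of `u + v(a + b√α)` and `M = uv + 2av² - 1`.
The two equations form a homogeneous linear system with the solution `(X, Y)`, where `Y ≠ 0`,
and `C` is, up to sign, the determinant of this system.
-/

theorem mul_sub_mul_eq_zero_of_isLeftRegular {R : Type*} [CommRing R] {x y p q p' q' : R}
    (hy : IsLeftRegular y) (h : x * p + y * q = 0) (h' : x * p' + y * q' = 0) :
    p' * q - p * q' = 0 := by
  rw [← hy.mul_left_eq_zero_iff]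
  linear_combination p' * h - p * h'

theorem stmt_6_general {R : Type*} [CommRing R] (a b α X Y : R) (hY : IsLeftRegular Y)
    (u v u' v' : R)
    (h1 : u ^ 2 * X + u * v * (2 * a * X + Y) +
        v ^ 2 * (2 * a * Y + X * (a ^ 2 - b ^ 2 * α)) - Y = 0)
    (h2 : u' ^ 2 * X + u' * v' * (2 * a * X + Y) +
        v' ^ 2 * (2 * a * Y + X * (a ^ 2 - b ^ 2 * α)) - Y = 0) :
    u ^ 2 - u' ^ 2 + u * v * u' ^ 2 - u ^ 2 * u' * v' +
        2 * a * (v ^ 2 * u' ^ 2 - u ^ 2 * v' ^ 2) + 2 * a * (u * v - u' * v') +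
        (3 * a ^ 2 + b ^ 2 * α) * (u' * v' * v ^ 2 - u * v * v' ^ 2) +
        (v ^ 2 - v' ^ 2) * (a ^ 2 - b ^ 2 * α) = 0 := by
  have linear_XY : X * (u ^ 2 + 2 * a * u * v + (a ^ 2 - b ^ 2 * α) * v ^ 2) +
      Y * (u * v + 2 * a * v ^ 2 - 1) = 0 := by
    linear_combination h1
  have linear_XY' : X * (u' ^ 2 + 2 * a * u' * v' + (a ^ 2 - b ^ 2 * α) * v' ^ 2) +
      Y * (u' * v' + 2 * a * v' ^ 2 - 1) = 0 := by
    linear_combination h2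
  linear_combination mul_sub_mul_eq_zero_of_isLeftRegular hY linear_XY linear_XY'

/-- If `(u, v)` and `(u', v')` both satisfy the determinant equation, then `C = 0`. -/
theorem stmt_6 (q : ℕ) (hodd : Odd q) (Fq : Type*) [Field Fq] [Fintype Fq]
    (hq : Fintype.card Fq = q)
    (a b α : Fq) (hα : ¬∃ x : Fq, x ^ 2 = α)
    (hab : ¬∃ x : Fq, x ^ 2 = a ^ 2 - b ^ 2 * α)
    (X Y : Fq) (hY : Y ≠ 0) (u v u' v' : Fq)
    (h1 : u ^ 2 * X + u * v * (2 * a * X + Y) +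
        v ^ 2 * (2 * a * Y + X * (a ^ 2 - b ^ 2 * α)) - Y = 0)
    (h2 : u' ^ 2 * X + u' * v' * (2 * a * X + Y) +
        v' ^ 2 * (2 * a * Y + X * (a ^ 2 - b ^ 2 * α)) - Y = 0) :
    u ^ 2 - u' ^ 2 + u * v * u' ^ 2 - u ^ 2 * u' * v' +
        2 * a * (v ^ 2 * u' ^ 2 - u ^ 2 * v' ^ 2) + 2 * a * (u * v - u' * v') +
        (3 * a ^ 2 + b ^ 2 * α) * (u' * v' * v ^ 2 - u * v * v' ^ 2) +
        (v ^ 2 - v' ^ 2) * (a ^ 2 - b ^ 2 * α) = 0 :=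
  stmt_6_general a b α X Y (IsRegular.of_ne_zero hY).left u v u' v' h1 h2
end

section
/- For all a₁, a₂, a₃ ∈ Fq with (a₂, a₃) ≠ (0, 0), the element M := 4a₁⁴·b²α − 4a₁²·(a³·a₃² + 2a²·a₂·a₃ + a·a₂² + 3a·a₃²·b²α + 2a₂·a₃·b²α) + (a₂² + a₃²·(3a² + b²α) + 4a·a₂·a₃)² is nonzero. -/
/-!
Put `d = b²α` and `w = (a₂ + a a₃) + a₃√d`. Writing `(a + √d) w² = t + s√d`, the element of the
statement is `M = 4d a₁⁴ - 4t a₁² + s²`. Completing the square in `a₁²` and taking norms from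
`F(√d)` to `F` gives `d M = (2d a₁² - t)² - (a² - d) N(w)²`. If `M = 0`, then `N(w) = 0` because
`a² - d` is not a square, and hence `w = 0` because `d` is not a square.
-/

section CommRing

variable {R : Type*} [CommRing R]

theorem mul_quadratic_eq_sq_sub (d t s y : R) :
    d * (4 * d * y ^ 2 - 4 * t * y + s ^ 2) =
      (2 * d * y - t) ^ 2 - (t ^ 2 - d * s ^ 2) := by
  ring

/-- Multiplicativity of the norm `N(u + v√d) = u² - d v²`, applied to `(a + √d) (u + v√d)²`. -/
theorem sq_sub_mul_sq_sub_mul_sq_sq (a d u v : R) :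
    (a ^ 2 - d) * (u ^ 2 - d * v ^ 2) ^ 2 =
      (a * (u ^ 2 + d * v ^ 2) + d * (2 * u * v)) ^ 2 -
        d * (u ^ 2 + d * v ^ 2 + a * (2 * u * v)) ^ 2 := by
  ring

end CommRing

section CommGroupWithZero

variable {G₀ : Type*} [CommGroupWithZero G₀]

theorem sq_eq_mul_sq_iff_of_not_isSquare {c x y : G₀} (hc : ¬IsSquare c) :
    x ^ 2 = c * y ^ 2 ↔ x = 0 ∧ y = 0 := by
  refine ⟨fun h ↦ ?_, by rintro ⟨rfl, rfl⟩; simp⟩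
  have hy : y = 0 := by
    by_contra hy
    have hcxy : c = x ^ 2 / y ^ 2 := eq_div_of_mul_eq (pow_ne_zero 2 hy) h.symm
    exact hc (hcxy ▸ (IsSquare.sq x).div (IsSquare.sq y))
  exact ⟨by simpa [hy] using h, hy⟩

theorem not_isSquare_sq_mul {b c : G₀} (hb : b ≠ 0) (hc : ¬IsSquare c) :
    ¬IsSquare (b ^ 2 * c) := by
  rintro ⟨r, hr⟩
  have hrb : r ^ 2 = c * b ^ 2 := by rw [sq, ← hr, mul_comm]
  exact hb ((sq_eq_mul_sq_iff_of_not_isSquare hc).1 hrb).2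

end CommGroupWithZero

section Field

variable {F : Type*} [Field F]

theorem eq_zero_and_eq_zero_of_quadratic_eq_zero {a d u v y : F} (hd : ¬IsSquare d)
    (had : ¬IsSquare (a ^ 2 - d))
    (h : 4 * d * y ^ 2 - 4 * (a * (u ^ 2 + d * v ^ 2) + d * (2 * u * v)) * y +
      (u ^ 2 + d * v ^ 2 + a * (2 * u * v)) ^ 2 = 0) :
    u = 0 ∧ v = 0 := by
  have square_eq : (2 * d * y - (a * (u ^ 2 + d * v ^ 2) + d * (2 * u * v))) ^ 2 =
      (a ^ 2 - d) * (u ^ 2 - d * v ^ 2) ^ 2 := by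
    rw [sq_sub_mul_sq_sub_mul_sq_sq, ← sub_eq_zero, ← mul_quadratic_eq_sq_sub, h, mul_zero]
  have norm_eq_zero : u ^ 2 - d * v ^ 2 = 0 :=
    ((sq_eq_mul_sq_iff_of_not_isSquare had).1 square_eq).2
  exact (sq_eq_mul_sq_iff_of_not_isSquare hd).1 (sub_eq_zero.1 norm_eq_zero)

theorem stmt_8_general {a b α : F} (hα : ¬IsSquare α) (hab : ¬IsSquare (a ^ 2 - b ^ 2 * α))
    (a₁ a₂ a₃ : F) (hne : (a₂, a₃) ≠ (0, 0)) :
    4 * a₁ ^ 4 * b ^ 2 * α -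
        4 * a₁ ^ 2 * (a ^ 3 * a₃ ^ 2 + 2 * a ^ 2 * a₂ * a₃ + a * a₂ ^ 2 +
          3 * a * a₃ ^ 2 * b ^ 2 * α + 2 * a₂ * a₃ * b ^ 2 * α) +
        (a₂ ^ 2 + a₃ ^ 2 * (3 * a ^ 2 + b ^ 2 * α) + 4 * a * a₂ * a₃) ^ 2 ≠ 0 := by
  intro hM
  have hb : b ≠ 0 := by
    rintro rfl
    exact hab ⟨a, by ring⟩
  obtain ⟨hu, rfl⟩ : a₂ + a * a₃ = 0 ∧ a₃ = 0 :=
    eq_zero_and_eq_zero_of_quadratic_eq_zero (y := a₁ ^ 2) (not_isSquare_sq_mul hb hα) hab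
      (by linear_combination hM)
  have ha₂ : a₂ = 0 := by simpa using hu
  exact hne (by rw [ha₂])

end Field

/-- For all `a₁, a₂, a₃ ∈ Fq` with `(a₂, a₃) ≠ (0, 0)`, the element `M` is nonzero. -/
theorem stmt_8 (q : ℕ) (hodd : Odd q) (Fq : Type*) [Field Fq] [Fintype Fq]
    (hq : Fintype.card Fq = q)
    (a b α : Fq) (hα : ¬∃ x : Fq, x ^ 2 = α)
    (hab : ¬∃ x : Fq, x ^ 2 = a ^ 2 - b ^ 2 * α) :
    ∀ a₁ a₂ a₃ : Fq, (a₂, a₃) ≠ (0, 0) →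
      4 * a₁ ^ 4 * b ^ 2 * α -
          4 * a₁ ^ 2 * (a ^ 3 * a₃ ^ 2 + 2 * a ^ 2 * a₂ * a₃ + a * a₂ ^ 2 +
            3 * a * a₃ ^ 2 * b ^ 2 * α + 2 * a₂ * a₃ * b ^ 2 * α) +
          (a₂ ^ 2 + a₃ ^ 2 * (3 * a ^ 2 + b ^ 2 * α) + 4 * a * a₂ * a₃) ^ 2 ≠ 0 :=
  stmt_8_general (by simpa only [isSquare_iff_exists_sq, eq_comm] using hα)
    (by simpa only [isSquare_iff_exists_sq, eq_comm] using hab)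
end

section
/- For every irreducible finite-dimensional complex representation (σ, V) of GL₂(Fq) and every group homomorphism θ : H → ℂˣ, the subspace {v ∈ V : σ(h)·v = θ(h)·v for all h ∈ H} of V has dimension at most 1. (In other words, the induced representation of any character of H to GL₂(Fq) is multiplicity free.) -/
/-!
Averaging over `H` turns `σ g` into a Hecke operator `T g` on the `θ`-eigenspace of `H`. Since `σ`
is irreducible, these operators have no common proper invariant subspace, so it suffices to show
that they commute, by Gelfand's trick: `T` is invariant under any anti-automorphism `t` which fixes
`H` pointwise and has a fixed point in every coset `H g`, while
`T g * T g' = |H|⁻¹ ∑ θ(h)⁻¹ T (g h g')` becomes `T (t g') * T (t g)` when `t` is applied inside the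
sum.

The group `H` is the group of nonzero elements `x + y A` of the field `F[A]`, where `A` is a
`2 × 2` matrix without eigenvalues. There is a symmetric `S` making `B S` symmetric for every `B`
commuting with `A`; then `t g = S gᵀ S⁻¹` fixes `H`, and it fixes `h g` if and only if `h g S` is
symmetric. For `h = x + y A` this is a single linear equation in two unknowns, so it has a nonzero
solution.
-/

open Matrix

section CommutingEndomorphisms

variable {k U ι : Type*} [Field k] [IsAlgClosed k] [AddCommGroup U] [Module k U]
  [FiniteDimensional k U]

theorem finrank_le_one_of_forall_commute (T : ι → Module.End k U)
    (hcomm : ∀ i j, Commute (T i) (T j))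
    (hirr : ∀ W : Submodule k U, (∀ i, W ∈ (T i).invtSubmodule) → W = ⊥ ∨ W = ⊤) :
    Module.finrank k U ≤ 1 := by
  cases subsingleton_or_nontrivial U
  · simp [Module.finrank_zero_of_subsingleton]
  let A := Algebra.adjoin k (Set.range T)
  have : IsMulCommutative A := Algebra.isMulCommutative_adjoin k <| by
    rintro _ ⟨i, rfl⟩ _ ⟨j, rfl⟩
    exact hcomm i j
  have : IsSimpleModule A U := (isSimpleModule_iff A U).mpr
    { eq_bot_or_eq_top := fun N ↦ by
        simpa using hirr (N.restrictScalars k) fun i v hv ↦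
          N.smul_mem ⟨T i, Algebra.subset_adjoin ⟨i, rfl⟩⟩ hv }
  exact (IsSimpleModule.finrank_eq_one_of_isMulCommutative A U k).le

end CommutingEndomorphisms

section CharTwist

variable {k G V : Type*} [CommRing k] [Group G] [AddCommGroup V] [Module k V]
  (ρ : Representation k G V)

/-- The twist `ρ ⊗ χ` of a representation by a character, realised on the space of `ρ` itself. The
eigenvectors of `ρ` with character `χ` are the invariants of the twist by `χ⁻¹`. -/
def charTwist (χ : G →* kˣ) : Representation k G V where
  toFun g := χ g • ρ g
  map_one' := by simp
  map_mul' g h := by simp [smul_mul_smul_comm]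

theorem charTwist_apply (χ : G →* kˣ) (g : G) (v : V) : charTwist ρ χ g v = χ g • ρ g v :=
  rfl

variable [Fintype G] [Invertible (Fintype.card G : k)]

theorem averageMap_eq_smul_sum (v : V) :
    ρ.averageMap v = ⅟(Fintype.card G : k) • ∑ g, ρ g v := by
  simp [GroupAlgebra.average]

theorem averageMap_apply_rho (g : G) (v : V) : ρ.averageMap (ρ g v) = ρ.averageMap v := by
  rw [Representation.averageMap, ← Representation.asAlgebraHom_single_one, ← Module.End.mul_apply,
    ← map_mul, GroupAlgebra.mul_average_right]

end CharTwist

/-- The hypotheses of Gelfand's trick for the subgroup `H`: `t` is anti-multiplicative, fixes `H`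
pointwise, and has a fixed point in every coset `H g`. -/
structure IsGelfandSymmetry {G : Type*} [Group G] (H : Subgroup G) (t : G → G) : Prop where
  map_mul (g g' : G) : t (g * g') = t g' * t g
  apply_of_mem (h : G) (hh : h ∈ H) : t h = h
  exists_fixed_in_coset (g : G) : ∃ h ∈ H, t (h * g) = h * g

section HeckeOperators

variable {k G V : Type*} [CommRing k] [Group G] [AddCommGroup V] [Module k V]
  {H : Subgroup G} (σ : Representation k G V) (θ : H →* kˣ)

/-- The subspace of `V` on which the subgroup `H` acts through the character `θ`. -/
noncomputable def charEigenspace : Submodule k V :=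
  (charTwist (σ.comp H.subtype) θ⁻¹).invariants

variable {σ θ} in
theorem mem_charEigenspace {v : V} :
    v ∈ charEigenspace σ θ ↔ ∀ h : H, σ h v = (θ h : k) • v :=
  forall_congr' fun h ↦ inv_smul_eq_iff (g := θ h) (a := σ h v)

variable [Fintype H] [Invertible (Fintype.card H : k)]

/-- The projection `v ↦ |H|⁻¹ ∑ θ(h)⁻¹ σ(h) v` of `V` onto `charEigenspace σ θ`. -/
noncomputable def charProj : V →ₗ[k] V :=
  (charTwist (σ.comp H.subtype) θ⁻¹).averageMap

theorem isProj_charProj : LinearMap.IsProj (charEigenspace σ θ) (charProj σ θ) :=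
  Representation.isProj_averageMap _

theorem charProj_eq_smul_sum (v : V) :
    charProj σ θ v = ⅟(Fintype.card H : k) • ∑ h : H, (θ h)⁻¹ • σ h v :=
  averageMap_eq_smul_sum _ v

theorem charProj_apply_rho (h : H) (v : V) :
    charProj σ θ (σ h v) = θ h • charProj σ θ v := by
  have h_inv : charProj σ θ ((θ h)⁻¹ • σ h v) = charProj σ θ v :=
    averageMap_apply_rho (charTwist (σ.comp H.subtype) θ⁻¹) h v
  rwa [Units.smul_def, map_smul, ← Units.smul_def, inv_smul_eq_iff] at h_inv

/-- The compression of `σ g` to `charEigenspace σ θ`, which is the Hecke operator of the double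
coset `H g H` up to normalisation. -/
noncomputable def heckeOperator (g : G) : Module.End k (charEigenspace σ θ) :=
  (charProj σ θ ∘ₗ σ g).restrict fun v _ ↦ (isProj_charProj σ θ).map_mem (σ g v)

theorem coe_heckeOperator_apply (g : G) (v : charEigenspace σ θ) :
    (heckeOperator σ θ g v : V) = charProj σ θ (σ g v) :=
  rfl

theorem heckeOperator_mul_left (h : H) (g : G) :
    heckeOperator σ θ (h * g) = θ h • heckeOperator σ θ g := by
  ext v
  simp [coe_heckeOperator_apply, charProj_apply_rho]

theorem heckeOperator_mul_right (g : G) (h : H) :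
    heckeOperator σ θ (g * h) = θ h • heckeOperator σ θ g := by
  ext v
  simp [coe_heckeOperator_apply, mem_charEigenspace.mp v.2 h, Units.smul_def]

theorem heckeOperator_mul_heckeOperator (g g' : G) :
    heckeOperator σ θ g * heckeOperator σ θ g' =
      ⅟(Fintype.card H : k) • ∑ h : H, (θ h)⁻¹ • heckeOperator σ θ (g * h * g') := by
  ext v
  simp [coe_heckeOperator_apply, charProj_eq_smul_sum σ θ (σ g' v), Units.smul_def]

namespace IsGelfandSymmetry

variable {t : G → G} (ht : IsGelfandSymmetry H t)
include ht

theorem heckeOperator_apply (g : G) : heckeOperator σ θ (t g) = heckeOperator σ θ g := by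
  obtain ⟨h, hh, h_fixed⟩ := ht.exists_fixed_in_coset g
  have h_conj : t g * h = h * g := by rw [← h_fixed, ht.map_mul, ht.apply_of_mem h hh]
  apply MulAction.injective (θ ⟨h, hh⟩)
  calc θ ⟨h, hh⟩ • heckeOperator σ θ (t g)
    _ = heckeOperator σ θ (t g * h) := (heckeOperator_mul_right σ θ (t g) ⟨h, hh⟩).symm
    _ = heckeOperator σ θ (h * g) := by rw [h_conj]
    _ = θ ⟨h, hh⟩ • heckeOperator σ θ g := heckeOperator_mul_left σ θ ⟨h, hh⟩ g

theorem commute_heckeOperator (g g' : G) :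
    Commute (heckeOperator σ θ g) (heckeOperator σ θ g') :=
  calc heckeOperator σ θ g * heckeOperator σ θ g'
    _ = ⅟(Fintype.card H : k) • ∑ h : H, (θ h)⁻¹ • heckeOperator σ θ (t (g * h * g')) := by
        simp only [heckeOperator_mul_heckeOperator, ht.heckeOperator_apply]
    _ = ⅟(Fintype.card H : k) • ∑ h : H, (θ h)⁻¹ • heckeOperator σ θ (t g' * h * t g) := by
        simp only [ht.map_mul, ht.apply_of_mem _ (SetLike.coe_mem _), mul_assoc]
    _ = heckeOperator σ θ g' * heckeOperator σ θ g := by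
        rw [← heckeOperator_mul_heckeOperator, ht.heckeOperator_apply, ht.heckeOperator_apply]

end IsGelfandSymmetry

end HeckeOperators

section Irreducible

variable {k G V : Type*} [Field k] [Group G] [AddCommGroup V] [Module k V]
  (σ : Representation k G V)

theorem isIrreducible_of_forall_eq_bot_or_eq_top [Nontrivial V]
    (hσ : ∀ W : Submodule k V, (∀ g, ∀ v ∈ W, σ g v ∈ W) → W = ⊥ ∨ W = ⊤) : σ.IsIrreducible where
  exists_pair_ne := ⟨⊥, ⊤, fun h ↦ bot_ne_top (congrArg Subrepresentation.toSubmodule h)⟩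
  eq_bot_or_eq_top N := (hσ N.toSubmodule N.apply_mem_toSubmodule).imp
    (fun h ↦ Subrepresentation.toSubmodule_injective h)
    (fun h ↦ Subrepresentation.toSubmodule_injective h)

theorem finiteDimensional_of_isIrreducible [Finite G] [σ.IsIrreducible] :
    FiniteDimensional k V :=
  have : Module.Finite k σ.asModule := .trans (MonoidAlgebra k G) _
  .equiv σ.asModuleEquiv

variable {H : Subgroup G} (θ : H →* kˣ) [σ.IsIrreducible]

theorem eq_bot_or_eq_top_of_mem_invtSubmodule_heckeOperator [Fintype H]
    [Invertible (Fintype.card H : k)] (W : Submodule k (charEigenspace σ θ))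
    (hW : ∀ g, W ∈ (heckeOperator σ θ g).invtSubmodule) : W = ⊥ ∨ W = ⊤ := by
  -- `N` is the largest subrepresentation that `charProj σ θ` maps into `W`.
  let N : Subrepresentation σ :=
    { toSubmodule :=
        ⨅ g, (W.map (charEigenspace σ θ).subtype).comap (charProj σ θ ∘ₗ σ g)
      apply_mem_toSubmodule := fun g v hv ↦ by
        simp only [Submodule.mem_iInf, Submodule.mem_comap, LinearMap.comp_apply] at hv ⊢
        exact fun g' ↦ by simpa using hv (g' * g) }
  have mem_N {w : charEigenspace σ θ} (hw : w ∈ W) : (w : V) ∈ N.toSubmodule :=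
    (Submodule.mem_iInf _).mpr fun g ↦ ⟨heckeOperator σ θ g w, hW g hw, rfl⟩
  have mem_W {u : charEigenspace σ θ} (hu : (u : V) ∈ N.toSubmodule) : u ∈ W := by
    obtain ⟨w, hw, hwu⟩ := (Submodule.mem_iInf _).mp hu 1
    have w_eq_u : w = u := Subtype.ext <| by
      simpa [(isProj_charProj σ θ).map_id u u.2] using hwu
    exact w_eq_u ▸ hw
  rcases eq_bot_or_eq_top N with hN | hN
  · refine .inl ((Submodule.eq_bot_iff W).mpr fun w hw ↦ Subtype.ext ?_)
    exact (hN ▸ mem_N hw : (w : V) ∈ (⊥ : Subrepresentation σ).toSubmodule)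
  · exact .inr (Submodule.eq_top_iff'.mpr fun u ↦ mem_W (hN ▸ Submodule.mem_top))

theorem IsGelfandSymmetry.finrank_charEigenspace_le_one [IsAlgClosed k] [FiniteDimensional k V]
    [Finite H] (hcard : (Nat.card H : k) ≠ 0) {t : G → G} (ht : IsGelfandSymmetry H t) :
    Module.finrank k (charEigenspace σ θ) ≤ 1 := by
  have := Fintype.ofFinite H
  rw [Nat.card_eq_fintype_card] at hcard
  have := invertibleOfNonzero hcard
  exact finrank_le_one_of_forall_commute (heckeOperator σ θ) (ht.commute_heckeOperator σ θ)
    (eq_bot_or_eq_top_of_mem_invtSubmodule_heckeOperator σ θ)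

end Irreducible

section FormAdjoint

variable {n R : Type*} [Fintype n] [DecidableEq n] [CommRing R]

/-- The anti-automorphism `g ↦ S gᵀ S⁻¹` of `GL n R`. For symmetric `S`, this is the adjoint
with respect to the bilinear form with Gram matrix `S⁻¹`. -/
def formAdjoint (S g : GL n R) : GL n R :=
  S * ⟨g.1ᵀ, g⁻¹.1ᵀ, by simp [← transpose_mul], by simp [← transpose_mul]⟩ * S⁻¹

theorem formAdjoint_mul (S g g' : GL n R) :
    formAdjoint S (g * g') = formAdjoint S g' * formAdjoint S g := by
  ext1
  simp [formAdjoint, mul_assoc]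

theorem formAdjoint_eq_self_iff {S : GL n R} (hS : S.1.IsSymm) (g : GL n R) :
    formAdjoint S g = g ↔ (g.1 * S.1).IsSymm := by
  rw [formAdjoint, mul_inv_eq_iff_eq_mul, ← Units.val_inj, IsSymm, transpose_mul, hS.eq]
  rfl

end FormAdjoint

theorem isUnit_smul_one_add_smul {F A : Type*} [Field F] [Ring A] [Algebra F A] {a : A}
    (ha : spectrum F a = ∅) {x y : F} (hxy : (x, y) ≠ (0, 0)) :
    IsUnit (x • (1 : A) + y • a) := by
  rcases eq_or_ne y 0 with rfl | hy
  · have hx : x ≠ 0 := by simpa using hxy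
    simpa [Algebra.algebraMap_eq_smul_one] using (IsUnit.mk0 x hx).map (algebraMap F A)
  · have h_unit : IsUnit (algebraMap F A (-x / y) - a) :=
      spectrum.notMem_iff.mp (ha ▸ Set.notMem_empty _)
    have h_eq : x • (1 : A) + y • a = Units.mk0 (-y) (neg_ne_zero.mpr hy) •
        (algebraMap F A (-x / y) - a) := by
      simp [Units.smul_def, smul_sub, Algebra.algebraMap_eq_smul_one, smul_smul, hy,
        mul_div_cancel₀]
    exact h_eq ▸ h_unit.smul _

section TwoByTwo

theorem isSymm_fin_two_iff {α : Type*} (M : Matrix (Fin 2) (Fin 2) α) :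
    M.IsSymm ↔ M 0 1 = M 1 0 := by
  simp [IsSymm.ext_iff, Fin.forall_fin_two, eq_comm]

variable {R : Type*} [CommRing R]

theorem exists_isSymm_smul_add_smul [Nontrivial R] (P Q : Matrix (Fin 2) (Fin 2) R) :
    ∃ x y : R, (x, y) ≠ (0, 0) ∧ (x • P + y • Q).IsSymm := by
  simp only [isSymm_fin_two_iff, Matrix.add_apply, Matrix.smul_apply, smul_eq_mul]
  by_cases hPQ : (Q 0 1 - Q 1 0, P 1 0 - P 0 1) = (0, 0)
  · have hP : P 1 0 - P 0 1 = 0 := congrArg Prod.snd hPQ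
    exact ⟨1, 0, by simp, by linear_combination -hP⟩
  · exact ⟨_, _, hPQ, by ring⟩

/-- A symmetric matrix `S` such that `B * S` is symmetric for every `B` commuting with `A`,
normalised by `S 1 1 = 0`. It is invertible exactly when `A 1 0` is. -/
def symmetrizer (A : Matrix (Fin 2) (Fin 2) R) : Matrix (Fin 2) (Fin 2) R :=
  !![A 0 0 - A 1 1, A 1 0; A 1 0, 0]

theorem isSymm_symmetrizer (A : Matrix (Fin 2) (Fin 2) R) : (symmetrizer A).IsSymm := by
  simp [isSymm_fin_two_iff, symmetrizer]

theorem isSymm_mul_symmetrizer {A B : Matrix (Fin 2) (Fin 2) R} (h : Commute B A) :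
    (B * symmetrizer A).IsSymm := by
  have h10 : B 1 0 * A 0 0 + B 1 1 * A 1 0 = A 1 0 * B 0 0 + A 1 1 * B 1 0 := by
    simpa [mul_apply, Fin.sum_univ_two] using congrFun₂ h.eq 1 0
  suffices B 0 0 * A 1 0 = B 1 0 * (A 0 0 - A 1 1) + B 1 1 * A 1 0 by
    simpa [isSymm_fin_two_iff, symmetrizer, mul_apply, Fin.sum_univ_two] using this
  linear_combination -h10

theorem commute_companion_iff (n t : R) (M : Matrix (Fin 2) (Fin 2) R) :
    Commute !![0, -n; 1, t] M ↔ ∃ x y, M = !![x, -n * y; y, x + t * y] := by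
  constructor
  · intro h
    refine ⟨M 0 0, M 1 0, ?_⟩
    have h01 : M 0 1 = -n * M 1 0 := by
      simpa [mul_apply, Fin.sum_univ_two] using (congrFun₂ h.eq 0 0).symm
    have h11 : M 0 0 + t * M 1 0 = M 1 1 := by
      simpa [mul_apply, Fin.sum_univ_two] using congrFun₂ h.eq 1 0
    rw [← h01, h11]
    exact eta_fin_two M
  · rintro ⟨x, y, rfl⟩
    ext i j
    fin_cases i <;> fin_cases j <;> simp [mul_apply] <;> ring

theorem mem_centralizer_companion_iff [Nontrivial R] {n t : R} {γ : GL (Fin 2) R}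
    (hγ : γ.1 = !![0, -n; 1, t]) (g : GL (Fin 2) R) :
    g ∈ Subgroup.centralizer {γ} ↔
      ∃ x y, (x, y) ≠ (0, 0) ∧ g.1 = !![x, -n * y; y, x + t * y] := by
  have h_comm : g ∈ Subgroup.centralizer {γ} ↔ Commute γ.1 g.1 := by
    rw [Subgroup.mem_centralizer_singleton_iff, eq_comm, ← Units.val_inj]
    rfl
  rw [h_comm, hγ, commute_companion_iff]
  refine exists₂_congr fun x y ↦ (and_iff_right_of_imp ?_).symm
  rintro hg ⟨⟩
  have h_zero : g.1 = 0 := by simp [hg, ← Matrix.ext_iff, Fin.forall_fin_two]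
  exact g.ne_zero h_zero

variable {F : Type*} [Field F]

theorem apply_one_zero_ne_zero_of_spectrum_eq_empty {A : Matrix (Fin 2) (Fin 2) F}
    (hA : spectrum F A = ∅) : A 1 0 ≠ 0 := by
  intro h10
  have h_unit : IsUnit (algebraMap F (Matrix (Fin 2) (Fin 2) F) (A 1 1) - A) :=
    spectrum.notMem_iff.mp (hA ▸ Set.notMem_empty _)
  simp [isUnit_iff_isUnit_det, det_fin_two, h10, algebraMap_matrix_apply] at h_unit

theorem isGelfandSymmetry_formAdjoint {γ S : GL (Fin 2) F} (hγ : spectrum F γ.1 = ∅)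
    (hS : S.1 = symmetrizer γ.1) :
    IsGelfandSymmetry (Subgroup.centralizer {γ}) (formAdjoint S) where
  map_mul := formAdjoint_mul S
  apply_of_mem h hh := by
    have h_comm : Commute h γ := Subgroup.mem_centralizer_singleton_iff.mp hh
    rw [formAdjoint_eq_self_iff (hS ▸ isSymm_symmetrizer _), hS]
    exact isSymm_mul_symmetrizer (h_comm.map (Units.coeHom _))
  exists_fixed_in_coset g := by
    obtain ⟨x, y, hxy, h_symm⟩ := exists_isSymm_smul_add_smul (g.1 * S.1) (γ.1 * (g.1 * S.1))
    obtain ⟨h, hh⟩ := isUnit_smul_one_add_smul hγ hxy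
    have h_comm : Commute h.1 γ.1 := by
      rw [hh]
      exact ((Commute.one_left _).smul_left x).add_left ((Commute.refl _).smul_left y)
    refine ⟨h, Subgroup.mem_centralizer_singleton_iff.mpr (Units.ext h_comm), ?_⟩
    rw [formAdjoint_eq_self_iff (hS ▸ isSymm_symmetrizer _), Units.val_mul, hh]
    simpa only [add_mul, smul_mul_assoc, one_mul, mul_assoc] using h_symm

theorem exists_isGelfandSymmetry_centralizer {γ : GL (Fin 2) F} (hγ : spectrum F γ.1 = ∅) :
    ∃ t, IsGelfandSymmetry (Subgroup.centralizer {γ}) t := by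
  have h_det : (symmetrizer γ.1).det ≠ 0 := by
    simp [symmetrizer, det_fin_two_of, apply_one_zero_ne_zero_of_spectrum_eq_empty hγ]
  exact ⟨_, isGelfandSymmetry_formAdjoint hγ
    (S := GeneralLinearGroup.mkOfDetNeZero _ h_det) rfl⟩

theorem spectrum_companion_eq_empty {a b α : F} (hα : ¬∃ x, x ^ 2 = α)
    (hab : ¬∃ x, x ^ 2 = a ^ 2 - b ^ 2 * α) :
    spectrum F !![0, -(a ^ 2 - b ^ 2 * α); 1, 2 * a] = ∅ := by
  have hb : b ≠ 0 := by
    rintro rfl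
    exact hab ⟨a, by ring⟩
  refine Set.eq_empty_of_forall_notMem fun μ ↦ spectrum.notMem_iff.mpr ?_
  rw [isUnit_iff_isUnit_det, isUnit_iff_ne_zero]
  intro h_det
  have h_charpoly : μ * (μ - 2 * a) - (b ^ 2 * α - a ^ 2) = 0 := by
    simpa [det_fin_two, algebraMap_matrix_apply] using h_det
  refine hα ⟨(μ - a) / b, ?_⟩
  field_simp
  linear_combination h_charpoly

end TwoByTwo

theorem stmt_10_general {F k V : Type*} [Field F] [Finite F] [Field k] [IsAlgClosed k]
    [AddCommGroup V] [Module k V] {γ : GL (Fin 2) F} (hγ : spectrum F γ.1 = ∅)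
    (hcard : (Nat.card (Subgroup.centralizer {γ}) : k) ≠ 0)
    (σ : Representation k (GL (Fin 2) F) V) [σ.IsIrreducible]
    (θ : Subgroup.centralizer {γ} →* kˣ) :
    Module.finrank k (charEigenspace σ θ) ≤ 1 := by
  have := finiteDimensional_of_isIrreducible σ
  obtain ⟨t, ht⟩ := exists_isGelfandSymmetry_centralizer hγ
  exact ht.finrank_charEigenspace_le_one σ θ hcard

/-- For every irreducible finite-dimensional complex representation `(σ, V)` of `GL₂(Fq)` and
every character `θ : H → ℂˣ` of the subgroup `H ≅ F_{q²}ˣ`, the subspace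
`{v ∈ V : σ(h)·v = θ(h)·v for all h ∈ H}` has dimension at most `1`. -/
theorem stmt_10 (q : ℕ) (hodd : Odd q) (Fq : Type*) [Field Fq] [Fintype Fq]
    (hq : Fintype.card Fq = q)
    (a b α : Fq) (hα : ¬∃ x : Fq, x ^ 2 = α)
    (hab : ¬∃ x : Fq, x ^ 2 = a ^ 2 - b ^ 2 * α)
    (H : Subgroup (GL (Fin 2) Fq))
    (hH : (H : Set (GL (Fin 2) Fq)) = {g : GL (Fin 2) Fq | ∃ x y : Fq, (x, y) ≠ (0, 0) ∧
      (g : Matrix (Fin 2) (Fin 2) Fq) = !![x, -(a ^ 2 - b ^ 2 * α) * y; y, x + 2 * a * y]})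
    (V : Type*) [AddCommGroup V] [Module ℂ V] [FiniteDimensional ℂ V] [Nontrivial V]
    (σ : Representation ℂ (GL (Fin 2) Fq) V)
    (hirr : ∀ W : Submodule ℂ V, (∀ g : GL (Fin 2) Fq, ∀ v ∈ W, σ g v ∈ W) → W = ⊥ ∨ W = ⊤)
    (θ : H →* ℂˣ)
    (Vθ : Submodule ℂ V)
    (hVθ : ∀ v : V, v ∈ Vθ ↔ ∀ h : H, σ (h : GL (Fin 2) Fq) v = (θ h : ℂ) • v) :
    Module.finrank ℂ Vθ ≤ 1 := by
  have h_spec := spectrum_companion_eq_empty hα hab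
  obtain ⟨γ, hγ⟩ := spectrum.isUnit_of_zero_notMem Fq (h_spec ▸ Set.notMem_empty (0 : Fq))
  obtain rfl : H = Subgroup.centralizer {γ} :=
    SetLike.ext' (hH.trans (Set.ext fun g ↦ (mem_centralizer_companion_iff hγ g).symm))
  obtain rfl : Vθ = charEigenspace σ θ :=
    Submodule.ext fun v ↦ (hVθ v).trans mem_charEigenspace.symm
  have := isIrreducible_of_forall_eq_bot_or_eq_top σ hirr
  exact stmt_10_general (hγ ▸ h_spec) (Nat.cast_ne_zero.mpr Nat.card_pos.ne') σ θ
end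

section
/- The map (y, z) ↦ H·γ(y,z) is a bijection from Fq × Fqˣ onto the set of right cosets of H in GL₂(Fq); equivalently, every g ∈ GL₂(Fq) factors uniquely as g = h·γ(y,z) with h ∈ H, y ∈ Fq and z ∈ Fqˣ. -/
/-!
Over a field `K`, `M(x, y)` is the matrix of multiplication by `x + yω` on the quadratic algebra
`K[ω]` with `ω² = -(a² - b²α) + 2aω`, and its first column is `(x, y)`. When `K[ω]` is a field,
`H` is the group of its nonzero elements acting on itself, so it acts simply transitively on the
nonzero vectors of `K²`. Hence `H` is a complement in `GL₂(K)` of the stabilizer of the first basis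
vector, and this stabilizer consists exactly of the matrices `γ(y, z)`.
-/

open Matrix MulAction

section MulVecAction

variable {n R : Type*} [Fintype n] [DecidableEq n] [Semiring R]

/-- The action of `GL n R` on column vectors. -/
instance generalLinearGroupMulVecAction : DistribMulAction (GL n R) (n → R) where
  smul g v := (g : Matrix n n R) *ᵥ v
  one_smul := one_mulVec
  mul_smul g h v := (mulVec_mulVec v (g : Matrix n n R) (h : Matrix n n R)).symm
  smul_zero g := mulVec_zero (g : Matrix n n R)
  smul_add g := mulVec_add (g : Matrix n n R)

theorem generalLinearGroup_smul_single_one (g : GL n R) (j : n) :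
    g • (Pi.single j 1 : n → R) = (g : Matrix n n R).col j :=
  mulVec_single_one _ j

end MulVecAction

section Mirabolic

variable {R : Type*} [CommRing R]

theorem mem_stabilizer_single_zero_iff {g : GL (Fin 2) R} :
    g ∈ stabilizer (GL (Fin 2) R) (Pi.single 0 1 : Fin 2 → R) ↔ g 0 0 = 1 ∧ g 1 0 = 0 := by
  rw [mem_stabilizer_iff, generalLinearGroup_smul_single_one, funext_iff, Fin.forall_fin_two]
  rfl

/-- The matrix `γ(y, z)` as an element of `GL₂(R)`. These matrices form the mirabolic subgroup,
here the stabilizer of the first basis vector. -/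
def mirabolic (y : R) (z : Rˣ) : GL (Fin 2) R where
  val := !![1, y; 0, z]
  inv := !![1, -(y * ↑z⁻¹); 0, ↑z⁻¹]
  val_inv := by simp [one_fin_two]
  inv_val := by simp [one_fin_two]

theorem coe_mirabolic (y : R) (z : Rˣ) :
    (mirabolic y z : Matrix (Fin 2) (Fin 2) R) = !![1, y; 0, (z : R)] :=
  rfl

theorem det_mirabolic (y : R) (z : Rˣ) : GeneralLinearGroup.det (mirabolic y z) = z :=
  Units.ext <| by simp [coe_mirabolic, det_fin_two]

theorem mirabolic_mem_stabilizer (y : R) (z : Rˣ) :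
    mirabolic y z ∈ stabilizer (GL (Fin 2) R) (Pi.single 0 1 : Fin 2 → R) :=
  mem_stabilizer_single_zero_iff.mpr ⟨rfl, rfl⟩

theorem mirabolic_det_eq_self {g : GL (Fin 2) R}
    (hg : g ∈ stabilizer (GL (Fin 2) R) (Pi.single 0 1 : Fin 2 → R)) :
    mirabolic (g 0 1) (GeneralLinearGroup.det g) = g := by
  obtain ⟨h00, h10⟩ := mem_stabilizer_single_zero_iff.mp hg
  have hdet : (g : Matrix (Fin 2) (Fin 2) R).det = g 1 1 := by
    rw [det_fin_two, h00, h10, one_mul, mul_zero, sub_zero]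
  apply Units.ext
  calc (mirabolic (g 0 1) (GeneralLinearGroup.det g) : Matrix (Fin 2) (Fin 2) R)
    _ = !![1, g 0 1; 0, g 1 1] := by
      rw [coe_mirabolic, GeneralLinearGroup.val_det_apply, hdet]
    _ = g := by rw [← h00, ← h10, ← eta_fin_two]

/-- The parametrization of the stabilizer of the first basis vector by `(y, z) ↦ γ(y, z)`; the
parameters are recovered as the upper right entry and the determinant. -/
def mirabolicEquiv :
    R × Rˣ ≃ stabilizer (GL (Fin 2) R) (Pi.single 0 1 : Fin 2 → R) where
  toFun p := ⟨mirabolic p.1 p.2, mirabolic_mem_stabilizer p.1 p.2⟩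
  invFun g := (g.1 0 1, GeneralLinearGroup.det g.1)
  left_inv p := Prod.ext rfl (det_mirabolic p.1 p.2)
  right_inv g := Subtype.ext (mirabolic_det_eq_self g.2)

theorem existsUnique_mul_mirabolic {H : Subgroup (GL (Fin 2) R)}
    (hH : H.IsComplement' (stabilizer (GL (Fin 2) R) (Pi.single 0 1 : Fin 2 → R)))
    (g : GL (Fin 2) R) :
    ∃! p : H × R × Rˣ, g = p.1 * mirabolic p.2.1 p.2.2 := by
  refine ((Equiv.prodCongr (Equiv.refl H) mirabolicEquiv).existsUnique_congr ?_).mpr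
    (hH.existsUnique g)
  exact fun _ ↦ eq_comm

end Mirabolic

section QuadraticTorus

variable {K : Type*} [Field K] {c d : K} {H : Subgroup (GL (Fin 2) K)}

/-- The matrices in `GL₂(K)` of multiplication by the elements `x + yω ≠ 0` of the quadratic algebra
`K[ω]`, `ω² = c + dω`, in the basis `1, ω`. It is encoded as a set of matrices, to be the carrier of
the subgroup `H`. -/
def quadraticTorus (c d : K) : Set (GL (Fin 2) K) :=
  {g | ∃ x y : K, (x, y) ≠ (0, 0) ∧
    (g : Matrix (Fin 2) (Fin 2) K) = !![x, c * y; y, x + d * y]}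

theorem quadraticTorus.det_ne_zero (hcd : ∀ r : K, r ^ 2 ≠ c + d * r) {x y : K}
    (hxy : (x, y) ≠ (0, 0)) : !![x, c * y; y, x + d * y].det ≠ 0 := by
  have : Fact (∀ r : K, r ^ 2 ≠ c + d * r) := ⟨hcd⟩
  let w : QuadraticAlgebra K c d := ⟨x, y⟩
  have hw : w ≠ 0 := fun h ↦
    hxy (Prod.ext (congrArg QuadraticAlgebra.re h) (congrArg QuadraticAlgebra.im h))
  have hdet : !![x, c * y; y, x + d * y].det = w.norm := by
    rw [det_fin_two_of, QuadraticAlgebra.norm_def]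
    ring
  rw [hdet]
  exact QuadraticAlgebra.norm_eq_zero_iff_eq_zero.not.mpr hw

theorem quadraticTorus.eq_one_of_smul_single_eq
    (hH : (H : Set (GL (Fin 2) K)) = quadraticTorus c d)
    (h : H) (hfix : h • (Pi.single 0 1 : Fin 2 → K) = Pi.single 0 1) : h = 1 := by
  obtain ⟨x, y, -, hval⟩ := hH.subset h.2
  obtain ⟨hx, hy⟩ := mem_stabilizer_single_zero_iff.mp hfix
  obtain rfl : x = 1 := by simpa [hval] using hx
  obtain rfl : y = 0 := by simpa [hval] using hy
  apply Subtype.ext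
  apply Units.ext
  simp [hval, one_fin_two]

theorem quadraticTorus.exists_smul_single_eq (hcd : ∀ r : K, r ^ 2 ≠ c + d * r)
    (hH : (H : Set (GL (Fin 2) K)) = quadraticTorus c d)
    {v : Fin 2 → K} (hv : v ≠ 0) : ∃ h : H, h • (Pi.single 0 1 : Fin 2 → K) = v := by
  have hne : (v 0, v 1) ≠ (0, 0) := fun h0 ↦
    hv (funext (Fin.forall_fin_two.mpr (Prod.mk.inj h0)))
  let h := GeneralLinearGroup.mkOfDetNeZero _ (quadraticTorus.det_ne_zero hcd hne)
  have hmem : h ∈ H := hH.superset ⟨v 0, v 1, hne, rfl⟩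
  refine ⟨⟨h, hmem⟩, (generalLinearGroup_smul_single_one h 0).trans ?_⟩
  exact funext (Fin.forall_fin_two.mpr ⟨rfl, rfl⟩)

theorem quadraticTorus.isComplement'_stabilizer_single (hcd : ∀ r : K, r ^ 2 ≠ c + d * r)
    (hH : (H : Set (GL (Fin 2) K)) = quadraticTorus c d) :
    H.IsComplement' (stabilizer (GL (Fin 2) K) (Pi.single 0 1 : Fin 2 → K)) := by
  refine Subgroup.isComplement'_stabilizer _ (quadraticTorus.eq_one_of_smul_single_eq hH) fun g ↦ ?_
  have hne : g • (Pi.single 0 1 : Fin 2 → K) ≠ 0 := (smul_ne_zero_iff_ne g).mpr (by simp)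
  obtain ⟨h, hh⟩ := quadraticTorus.exists_smul_single_eq hcd hH hne
  exact ⟨h⁻¹, by rw [← hh, inv_smul_smul]⟩

end QuadraticTorus

theorem sq_ne_of_not_exists_sq {K : Type*} [Field K] {a b α : K} (hb : b ≠ 0)
    (hα : ¬∃ x : K, x ^ 2 = α) (r : K) : r ^ 2 ≠ -(a ^ 2 - b ^ 2 * α) + 2 * a * r := by
  intro hr
  have hsq : (r - a) ^ 2 = α * b ^ 2 := by linear_combination hr
  exact hα ⟨(r - a) / b, by rw [div_pow, div_eq_iff (pow_ne_zero 2 hb), hsq]⟩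

theorem stmt_12_general {K : Type*} [Field K] {c d : K} (hcd : ∀ r : K, r ^ 2 ≠ c + d * r)
    (H : Subgroup (GL (Fin 2) K)) (hH : (H : Set (GL (Fin 2) K)) = quadraticTorus c d)
    (g : GL (Fin 2) K) :
    ∃! p : H × K × Kˣ,
      (g : Matrix (Fin 2) (Fin 2) K) =
        ((p.1 : GL (Fin 2) K) : Matrix (Fin 2) (Fin 2) K) * !![1, p.2.1; 0, (p.2.2 : K)] :=
  (existsUnique_congr fun _ ↦ Units.ext_iff).mp
    (existsUnique_mul_mirabolic (quadraticTorus.isComplement'_stabilizer_single hcd hH) g)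

/-- Every `g ∈ GL₂(Fq)` factors uniquely as `g = h·γ(y,z)` with `h ∈ H`, `y ∈ Fq`, `z ∈ Fqˣ`;
equivalently `(y, z) ↦ H·γ(y,z)` is a bijection onto the right cosets of `H`. -/
theorem stmt_12 (q : ℕ) (hodd : Odd q) (Fq : Type*) [Field Fq] [Fintype Fq]
    (hq : Fintype.card Fq = q)
    (a b α : Fq) (hα : ¬∃ x : Fq, x ^ 2 = α)
    (hab : ¬∃ x : Fq, x ^ 2 = a ^ 2 - b ^ 2 * α)
    (H : Subgroup (GL (Fin 2) Fq))
    (hH : (H : Set (GL (Fin 2) Fq)) = {g : GL (Fin 2) Fq | ∃ x y : Fq, (x, y) ≠ (0, 0) ∧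
      (g : Matrix (Fin 2) (Fin 2) Fq) = !![x, -(a ^ 2 - b ^ 2 * α) * y; y, x + 2 * a * y]}) :
    ∀ g : GL (Fin 2) Fq, ∃! p : H × Fq × Fqˣ,
      (g : Matrix (Fin 2) (Fin 2) Fq) =
        ((p.1 : GL (Fin 2) Fq) : Matrix (Fin 2) (Fin 2) Fq) * !![1, p.2.1; 0, (p.2.2 : Fq)] := by
  have hb : b ≠ 0 := fun hb ↦ hab ⟨a, by simp [hb]⟩
  exact stmt_12_general (sq_ne_of_not_exists_sq hb hα) H hH
end

section
/- For y, y' ∈ Fq and z, z' ∈ Fqˣ, the double cosets H·γ(y,z)·H and H·γ(y',z')·H in GL₂(Fq) coincide if and only if z'·(y² + 2a·y·(z − 1) + (1 + z²)·(a² − b²α)) = z·(y'² + 2a·y'·(z' − 1) + (1 + z'²)·(a² − b²α)). -/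
/-!
Let `θ` be a root of `X² - tX + n`. The matrices `x + yC`, with `C` the companion matrix, represent
multiplication by `x + yθ`, and the absence of roots in `F` makes all the nonzero ones invertible.
Hence `HγH = Hγ'H` exactly when `hγ = γ'k` for some nonzero `h, k ∈ F[C]`. An element of `F[C]` is
determined by its first column, and the first column of `γ` is the first basis vector, so `k`
determines `h`. Comparing second columns leaves a homogeneous `2 × 2` linear system for the
coordinates of `k`, whose determinant is the difference of the two sides of the criterion.
-/

open Matrix DoubleCoset

lemma doubleCoset_eq_iff_exists_mul_eq_mul {G : Type*} [Group G] {H K : Subgroup G} {g g' : G} :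
    doubleCoset g H K = doubleCoset g' H K ↔ ∃ h ∈ H, ∃ k ∈ K, h * g = g' * k := by
  refine (rel_iff (H := H) (K := K)).trans ⟨?_, ?_⟩
  · rintro ⟨h, hh, k, hk, rfl⟩
    exact ⟨h, hh, k⁻¹, K.inv_mem hk, (mul_inv_cancel_right _ k).symm⟩
  · rintro ⟨h, hh, k, hk, heq⟩
    exact ⟨h, hh, k⁻¹, K.inv_mem hk, eq_mul_inv_of_mul_eq heq.symm⟩

lemma exists_pair_mulVec_eq_zero_iff {R : Type*} [CommRing R] [IsDomain R]
    {A : Matrix (Fin 2) (Fin 2) R} :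
    (∃ x y : R, (x, y) ≠ (0, 0) ∧ A *ᵥ ![x, y] = 0) ↔ A.det = 0 := by
  simp [← exists_mulVec_eq_zero_iff, Fin.exists_fin_succ_pi]

section CommRing

variable {R : Type*} [CommRing R]

/-- The matrix of multiplication by `x + yθ` on `R[θ] = R[X]/(X² - tX + n)` in the basis `1, θ`.
The group `H` consists of the nonzero matrices of this form, with `t = 2a` and `n = a² - b²α`. -/
def quadraticMatrix (t n x y : R) : Matrix (Fin 2) (Fin 2) R :=
  !![x, -n * y; y, x + t * y]

lemma det_quadraticMatrix (t n x y : R) :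
    (quadraticMatrix t n x y).det = x ^ 2 + t * x * y + n * y ^ 2 := by
  rw [quadraticMatrix, det_fin_two_of]
  ring

lemma pair_ne_zero_of_coe_eq_quadraticMatrix [Nontrivial R] {t n x y : R} {g : GL (Fin 2) R}
    (hg : (g : Matrix (Fin 2) (Fin 2) R) = quadraticMatrix t n x y) : (x, y) ≠ (0, 0) := by
  rintro ⟨⟩
  exact g.det_ne_zero (by simp [hg, det_quadraticMatrix])

/-- The linear system for the coordinates `(x, u)` of `k = x + uθ` that expresses the existence of
an `h ∈ R[θ]` with `h * γ(y, z) = γ(y', z') * k`. -/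
def intertwiningMatrix (t n y z y' z' : R) : Matrix (Fin 2) (Fin 2) R :=
  !![y - y', y * y' - n * (z * z' - 1) - t * y'; z - z', z' * y + y' * z + t * z' * (z - 1)]

lemma det_intertwiningMatrix (t n y z y' z' : R) :
    (intertwiningMatrix t n y z y' z').det =
      z' * (y ^ 2 + t * y * (z - 1) + (1 + z ^ 2) * n) -
        z * (y' ^ 2 + t * y' * (z' - 1) + (1 + z' ^ 2) * n) := by
  rw [intertwiningMatrix, det_fin_two_of]
  ring

lemma quadraticMatrix_mul_eq_mul_quadraticMatrix_iff {t n y z y' z' w v x u : R} :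
    quadraticMatrix t n w v * !![1, y; 0, z] = !![1, y'; 0, z'] * quadraticMatrix t n x u ↔
      w = x + y' * u ∧ v = z' * u ∧ intertwiningMatrix t n y z y' z' *ᵥ ![x, u] = 0 := by
  simp only [quadraticMatrix, intertwiningMatrix, mul_fin_two, cons_mulVec, empty_mulVec,
    vec2_dotProduct', EmbeddingLike.apply_eq_iff_eq, vecCons_inj, cons_eq_zero_iff,
    zero_empty, and_true]
  constructor
  · rintro ⟨⟨h00, h01⟩, h10, h11⟩
    have hw : w = x + y' * u := by linear_combination h00
    have hv : v = z' * u := by linear_combination h10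
    subst hw hv
    exact ⟨rfl, rfl, by linear_combination h01, by linear_combination h11⟩
  · rintro ⟨rfl, rfl, hfst, hsnd⟩
    exact ⟨⟨by ring, by linear_combination hfst⟩, by ring, by linear_combination hsnd⟩

end CommRing

section Field

variable {F : Type*} [Field F] {t n : F}

lemma det_quadraticMatrix_ne_zero (hroot : ∀ r : F, r ^ 2 - t * r + n ≠ 0) {x y : F}
    (hxy : (x, y) ≠ (0, 0)) : (quadraticMatrix t n x y).det ≠ 0 := by
  rw [det_quadraticMatrix]
  intro hdet
  by_cases hy : y = 0
  · subst hy
    exact hxy (by simpa using hdet)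
  · apply hroot (-x / y)
    field_simp
    linear_combination hdet

lemma sq_sub_two_mul_add_ne_zero {a b α : F} (hα : ¬∃ x : F, x ^ 2 = α) (hb : b ≠ 0) (r : F) :
    r ^ 2 - 2 * a * r + (a ^ 2 - b ^ 2 * α) ≠ 0 := by
  intro hr
  refine hα ⟨(r - a) / b, ?_⟩
  field_simp
  linear_combination hr

theorem stmt_13_general (hroot : ∀ r : F, r ^ 2 - t * r + n ≠ 0) {H : Subgroup (GL (Fin 2) F)}
    (hH : (H : Set (GL (Fin 2) F)) = {g : GL (Fin 2) F | ∃ x y : F, (x, y) ≠ (0, 0) ∧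
      (g : Matrix (Fin 2) (Fin 2) F) = quadraticMatrix t n x y})
    {y z y' z' : F} {γ γ' : GL (Fin 2) F}
    (hγ : (γ : Matrix (Fin 2) (Fin 2) F) = !![1, y; 0, z])
    (hγ' : (γ' : Matrix (Fin 2) (Fin 2) F) = !![1, y'; 0, z']) :
    doubleCoset γ H H = doubleCoset γ' H H ↔
      z' * (y ^ 2 + t * y * (z - 1) + (1 + z ^ 2) * n) =
        z * (y' ^ 2 + t * y' * (z' - 1) + (1 + z' ^ 2) * n) := by
  have hmem (g : GL (Fin 2) F) : g ∈ H ↔ ∃ x y : F, (x, y) ≠ (0, 0) ∧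
      (g : Matrix (Fin 2) (Fin 2) F) = quadraticMatrix t n x y := Set.ext_iff.1 hH g
  rw [doubleCoset_eq_iff_exists_mul_eq_mul, ← sub_eq_zero, ← det_intertwiningMatrix,
    ← exists_pair_mulVec_eq_zero_iff]
  constructor
  · rintro ⟨h, hh, k, hk, heq⟩
    obtain ⟨w, v, -, hh_eq⟩ := (hmem h).1 hh
    obtain ⟨x, u, hxu, hk_eq⟩ := (hmem k).1 hk
    have hmul : (h * γ : Matrix (Fin 2) (Fin 2) F) = γ' * k := congrArg Units.val heq
    rw [hh_eq, hk_eq, hγ, hγ', quadraticMatrix_mul_eq_mul_quadraticMatrix_iff] at hmul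
    exact ⟨x, u, hxu, hmul.2.2⟩
  · rintro ⟨x, u, hxu, hker⟩
    let k := GeneralLinearGroup.mkOfDetNeZero _ (det_quadraticMatrix_ne_zero hroot hxu)
    have hmul := quadraticMatrix_mul_eq_mul_quadraticMatrix_iff.2 ⟨rfl, rfl, hker⟩
    rw [← hγ, ← hγ'] at hmul
    have hh : ((γ' * k * γ⁻¹ : GL (Fin 2) F) : Matrix (Fin 2) (Fin 2) F) =
        quadraticMatrix t n (x + y' * u) (z' * u) :=
      ((Units.eq_mul_inv_iff_mul_eq γ).2 hmul).symm
    exact ⟨γ' * k * γ⁻¹, (hmem _).2 ⟨_, _, pair_ne_zero_of_coe_eq_quadraticMatrix hh, hh⟩,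
      k, (hmem k).2 ⟨x, u, hxu, rfl⟩, inv_mul_cancel_right _ γ⟩

end Field

/-- The double cosets `H·γ(y,z)·H` and `H·γ(y',z')·H` coincide iff
`z'·(y² + 2a·y·(z − 1) + (1 + z²)·(a² − b²α)) = z·(y'² + 2a·y'·(z' − 1) + (1 + z'²)·(a² − b²α))`. -/
theorem stmt_13 (q : ℕ) (hodd : Odd q) (Fq : Type*) [Field Fq] [Fintype Fq]
    (hq : Fintype.card Fq = q)
    (a b α : Fq) (hα : ¬∃ x : Fq, x ^ 2 = α)
    (hab : ¬∃ x : Fq, x ^ 2 = a ^ 2 - b ^ 2 * α)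
    (H : Subgroup (GL (Fin 2) Fq))
    (hH : (H : Set (GL (Fin 2) Fq)) = {g : GL (Fin 2) Fq | ∃ x y : Fq, (x, y) ≠ (0, 0) ∧
      (g : Matrix (Fin 2) (Fin 2) Fq) = !![x, -(a ^ 2 - b ^ 2 * α) * y; y, x + 2 * a * y]})
    (y y' : Fq) (z z' : Fqˣ) (γ γ' : GL (Fin 2) Fq)
    (hγ : (γ : Matrix (Fin 2) (Fin 2) Fq) = !![1, y; 0, (z : Fq)])
    (hγ' : (γ' : Matrix (Fin 2) (Fin 2) Fq) = !![1, y'; 0, (z' : Fq)]) :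
    ({x | ∃ h₁ ∈ H, ∃ h₂ ∈ H, x = h₁ * γ * h₂} : Set (GL (Fin 2) Fq)) =
        {x | ∃ h₁ ∈ H, ∃ h₂ ∈ H, x = h₁ * γ' * h₂} ↔
      (z' : Fq) * (y ^ 2 + 2 * a * y * ((z : Fq) - 1) + (1 + (z : Fq) ^ 2) * (a ^ 2 - b ^ 2 * α)) =
        (z : Fq) * (y' ^ 2 + 2 * a * y' * ((z' : Fq) - 1) +
          (1 + (z' : Fq) ^ 2) * (a ^ 2 - b ^ 2 * α)) := by
  have hb : b ≠ 0 := fun hb ↦ hab ⟨a, by simp [hb]⟩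
  simpa only [Set.ext_iff, mem_doubleCoset, SetLike.mem_coe, Set.mem_ofPred_eq] using
    stmt_13_general (sq_sub_two_mul_add_ne_zero hα hb) hH hγ hγ'
end

section
/- Let T₁ = {diag(m, m') : m, m' ∈ Fqˣ} be the subgroup of invertible diagonal matrices in GL₂(Fq). The map y ↦ H·γ(y,1)·T₁ is a bijection from Fq onto the set of (H, T₁)-double cosets in GL₂(Fq). -/
/-!
Identify `F²` with the quadratic field `L = F[ω]`, `ω² = c + d ω`, through the basis `1, ω`. Then
`H` is the group of multiplications by nonzero elements of `L`, and a matrix in `GL₂(F)` is a pair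
`(u, v)` of `F`-independent elements of `L`, its columns. The group `H` scales `u` and `v` by a
common element of `Lˣ` and the diagonal torus scales them by independent elements of `Fˣ`, so a
double coset is a class of ratios `v / u ∈ L \ F` modulo `Fˣ`. Each class contains exactly one
element of the form `y + ω`, namely the ratio of the columns of `γ(y, 1)`.
-/

open Module QuadraticAlgebra

section DoubleCoset

open DoubleCoset

theorem bijective_doubleCoset_iff_existsUnique {G ι : Type*} [Group G] (H K : Subgroup G)
    (f : ι → G) :
    Function.Bijective (fun i : ι =>
      (⟨{x | ∃ h ∈ H, ∃ k ∈ K, x = h * f i * k}, ⟨f i, rfl⟩⟩ :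
        {S : Set G // ∃ g : G, S = {x | ∃ h ∈ H, ∃ k ∈ K, x = h * g * k}})) ↔
    ∀ g : G, ∃! i, ∃ h ∈ H, ∃ k ∈ K, g = h * f i * k := by
  have setOf_eq (g : G) : {x | ∃ h ∈ H, ∃ k ∈ K, x = h * g * k} = doubleCoset g H K :=
    Set.ext fun _ => mem_doubleCoset.symm
  have eq_iff (i : ι) (g : G) : doubleCoset (f i) H K = doubleCoset g H K ↔
      ∃ h ∈ H, ∃ k ∈ K, g = h * f i * k := rel_iff
  simp only [Function.bijective_iff_existsUnique, Subtype.forall, Subtype.mk.injEq,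
    forall_exists_index, forall_eq_apply_imp_iff, setOf_eq, eq_iff]

end DoubleCoset

section CommRing

variable {R : Type*} [CommRing R] {c d : R}

theorem coe_quadraticAlgebra_basis : ⇑(basis c d) = ![1, ω] := by
  ext i : 1
  fin_cases i <;> simp [basis, linearEquivTuple, QuadraticAlgebra.ext_iff]

theorem leftMulMatrix_quadraticAlgebra_basis (z : QuadraticAlgebra R c d) :
    Algebra.leftMulMatrix (basis c d) z = !![z.re, c * z.im; z.im, z.re + d * z.im] := by
  ext i j
  rw [Algebra.leftMulMatrix_eq_repr_mul]
  fin_cases i <;> fin_cases j <;> simp [coe_quadraticAlgebra_basis]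

theorem toMatrix_quadraticAlgebra_basis_pair (u v : QuadraticAlgebra R c d) :
    (basis c d).toMatrix ![u, v] = !![u.re, v.re; u.im, v.im] := by
  ext i j
  fin_cases i <;> fin_cases j <;> rfl

theorem toMatrix_quadraticAlgebra_basis_pair_inj {u v u' v' : QuadraticAlgebra R c d} :
    (basis c d).toMatrix ![u, v] = (basis c d).toMatrix ![u', v'] ↔ u = u' ∧ v = v' :=
  (basis c d).toMatrixEquiv.injective.eq_iff.trans (by simp)

theorem exists_toMatrix_quadraticAlgebra_basis_pair_eq (c d : R) (A : Matrix (Fin 2) (Fin 2) R) :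
    ∃ u v, (basis c d).toMatrix ![u, v] = A :=
  ⟨⟨A 0 0, A 1 0⟩, ⟨A 0 1, A 1 1⟩, by
    rw [toMatrix_quadraticAlgebra_basis_pair, ← Matrix.eta_fin_two A]⟩

theorem leftMulMatrix_mul_unipotent_mul_diagonal (z : QuadraticAlgebra R c d) (y m m' : R) :
    Algebra.leftMulMatrix (basis c d) z * !![1, y; 0, 1] * !![m, 0; 0, m'] =
      (basis c d).toMatrix ![m • z, m' • (z * ⟨y, 1⟩)] := by
  have unipotent_mul_diagonal : !![1, y; 0, 1] * !![m, 0; 0, m'] =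
      (basis c d).toMatrix ![m • 1, m' • ⟨y, 1⟩] := by
    simp [toMatrix_quadraticAlgebra_basis_pair, mul_comm]
  rw [mul_assoc, unipotent_mul_diagonal, ← Basis.toMatrix_smul, Matrix.smul_cons, Matrix.smul_cons,
    Matrix.smul_empty, smul_eq_mul, smul_eq_mul, mul_smul_comm, mul_smul_comm, mul_one]

end CommRing

section Field

variable {F : Type*} [Field F] {c d : F} [Fact (∀ r, r ^ 2 ≠ c + d * r)]

theorem ne_zero_and_im_div_ne_zero_of_det_ne_zero {u v : QuadraticAlgebra F c d}
    (hdet : ((basis c d).toMatrix ![u, v]).det ≠ 0) : u ≠ 0 ∧ (v / u).im ≠ 0 := by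
  rw [toMatrix_quadraticAlgebra_basis_pair, Matrix.det_fin_two_of] at hdet
  have hu : u ≠ 0 := by
    rintro rfl
    simp at hdet
  refine ⟨hu, fun him => hdet ?_⟩
  have hv : v = (v / u).re • u := by
    rw [Algebra.smul_def, ← div_eq_iff hu]
    exact QuadraticAlgebra.ext rfl him
  rw [hv]
  simp only [re_smul, im_smul, smul_eq_mul]
  ring

theorem eq_torus_mul_unipotent_mul_diagonal_iff {u v : QuadraticAlgebra F c d}
    (hdet : ((basis c d).toMatrix ![u, v]).det ≠ 0) (y : F) :
    (∃ z : QuadraticAlgebra F c d, z ≠ 0 ∧ ∃ m m' : Fˣ, (basis c d).toMatrix ![u, v] =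
      Algebra.leftMulMatrix (basis c d) z * !![1, y; 0, 1] * !![(m : F), 0; 0, (m' : F)]) ↔
    y = (v / u).re / (v / u).im := by
  simp only [leftMulMatrix_mul_unipotent_mul_diagonal, toMatrix_quadraticAlgebra_basis_pair_inj]
  constructor
  · rintro ⟨z, hz, m, m', rfl, rfl⟩
    have ratio : (m' : F) • (z * ⟨y, 1⟩) / ((m : F) • z) =
        ((m' : F) / m) • (⟨y, 1⟩ : QuadraticAlgebra F c d) := by
      rw [div_eq_iff (smul_ne_zero m.ne_zero hz), smul_mul_smul_comm,
        div_mul_cancel₀ _ m.ne_zero, mul_comm z]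
    simp [ratio]
  · rintro rfl
    obtain ⟨hu, him⟩ := ne_zero_and_im_div_ne_zero_of_det_ne_zero hdet
    have ratio : (v / u).im • (⟨(v / u).re / (v / u).im, 1⟩ : QuadraticAlgebra F c d) = v / u := by
      ext
      · exact mul_div_cancel₀ _ him
      · exact mul_one _
    refine ⟨u, hu, 1, Units.mk0 _ him, by simp, ?_⟩
    rw [Units.val_mk0, ← mul_smul_comm, ratio, mul_div_cancel₀ _ hu]

theorem mem_doubleCoset_unipotent_iff {H T : Subgroup (GL (Fin 2) F)}
    (hH : (H : Set (GL (Fin 2) F)) = {g : GL (Fin 2) F | ∃ x y : F, (x, y) ≠ (0, 0) ∧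
      (g : Matrix (Fin 2) (Fin 2) F) = !![x, c * y; y, x + d * y]})
    (hT : (T : Set (GL (Fin 2) F)) = {g : GL (Fin 2) F | ∃ m m' : Fˣ,
      (g : Matrix (Fin 2) (Fin 2) F) = !![(m : F), 0; 0, (m' : F)]})
    {n : GL (Fin 2) F} {y : F} (hn : (n : Matrix (Fin 2) (Fin 2) F) = !![1, y; 0, 1])
    (g : GL (Fin 2) F) :
    (∃ h ∈ H, ∃ t ∈ T, g = h * n * t) ↔
      ∃ z : QuadraticAlgebra F c d, z ≠ 0 ∧ ∃ m m' : Fˣ, (g : Matrix (Fin 2) (Fin 2) F) =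
        Algebra.leftMulMatrix (basis c d) z * !![1, y; 0, 1] * !![(m : F), 0; 0, (m' : F)] := by
  simp only [← SetLike.mem_coe, hH, hT, Set.mem_ofPred_eq]
  constructor
  · rintro ⟨h, ⟨x, w, hxw, hh⟩, t, ⟨m, m', ht⟩, rfl⟩
    refine ⟨⟨x, w⟩, by simpa [QuadraticAlgebra.ext_iff] using hxw, m, m', ?_⟩
    rw [Units.val_mul, Units.val_mul, hh, hn, ht, leftMulMatrix_quadraticAlgebra_basis]
  · rintro ⟨z, hz, m, m', hg⟩
    let h : GL (Fin 2) F := Units.map (Algebra.leftMulMatrix (basis c d)) (Units.mk0 z hz)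
    let t : GL (Fin 2) F := .mkOfDetNeZero !![(m : F), 0; 0, (m' : F)] (by simp)
    refine ⟨h, ⟨z.re, z.im, by simpa [QuadraticAlgebra.ext_iff] using hz,
      leftMulMatrix_quadraticAlgebra_basis z⟩, t, ⟨m, m', rfl⟩, Units.ext ?_⟩
    rw [Units.val_mul, Units.val_mul, hn, hg]
    rfl

end Field

theorem sq_ne_add_mul_of_not_exists_sq {F : Type*} [Field F] {a b α : F} (hα : ¬∃ x : F, x ^ 2 = α)
    (hb : b ≠ 0) (r : F) : r ^ 2 ≠ -(a ^ 2 - b ^ 2 * α) + 2 * a * r := by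
  intro hr
  refine hα ⟨(r - a) / b, ?_⟩
  rw [div_pow, div_eq_iff (pow_ne_zero 2 hb)]
  linear_combination hr

theorem stmt_14_general {F : Type*} [Field F] {c d : F} (hcd : ∀ r, r ^ 2 ≠ c + d * r)
    {H T : Subgroup (GL (Fin 2) F)}
    (hH : (H : Set (GL (Fin 2) F)) = {g : GL (Fin 2) F | ∃ x y : F, (x, y) ≠ (0, 0) ∧
      (g : Matrix (Fin 2) (Fin 2) F) = !![x, c * y; y, x + d * y]})
    (hT : (T : Set (GL (Fin 2) F)) = {g : GL (Fin 2) F | ∃ m m' : Fˣ,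
      (g : Matrix (Fin 2) (Fin 2) F) = !![(m : F), 0; 0, (m' : F)]})
    {γ : F → GL (Fin 2) F}
    (hγ : ∀ y : F, (γ y : Matrix (Fin 2) (Fin 2) F) = !![1, y; 0, 1]) :
    Function.Bijective (fun y : F =>
      (⟨{x | ∃ h ∈ H, ∃ t ∈ T, x = h * γ y * t}, ⟨γ y, rfl⟩⟩ :
        {S : Set (GL (Fin 2) F) //
          ∃ g : GL (Fin 2) F, S = {x | ∃ h ∈ H, ∃ t ∈ T, x = h * g * t}})) := by
  have : Fact (∀ r, r ^ 2 ≠ c + d * r) := ⟨hcd⟩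
  rw [bijective_doubleCoset_iff_existsUnique]
  intro g
  obtain ⟨u, v, huv⟩ := exists_toMatrix_quadraticAlgebra_basis_pair_eq c d g.val
  have hdet : ((basis c d).toMatrix ![u, v]).det ≠ 0 := huv ▸ g.det_ne_zero
  simp only [mem_doubleCoset_unipotent_iff hH hT (hγ _), ← huv,
    eq_torus_mul_unipotent_mul_diagonal_iff hdet, existsUnique_eq]

/-- The map `y ↦ H·γ(y,1)·T₁` is a bijection from `Fq` onto the set of `(H, T₁)`-double
cosets in `GL₂(Fq)`, where `T₁` is the diagonal torus. -/
theorem stmt_14 (q : ℕ) (hodd : Odd q) (Fq : Type*) [Field Fq] [Fintype Fq]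
    (hq : Fintype.card Fq = q)
    (a b α : Fq) (hα : ¬∃ x : Fq, x ^ 2 = α)
    (hab : ¬∃ x : Fq, x ^ 2 = a ^ 2 - b ^ 2 * α)
    (H : Subgroup (GL (Fin 2) Fq))
    (hH : (H : Set (GL (Fin 2) Fq)) = {g : GL (Fin 2) Fq | ∃ x y : Fq, (x, y) ≠ (0, 0) ∧
      (g : Matrix (Fin 2) (Fin 2) Fq) = !![x, -(a ^ 2 - b ^ 2 * α) * y; y, x + 2 * a * y]})
    (T₁ : Subgroup (GL (Fin 2) Fq))
    (hT₁ : (T₁ : Set (GL (Fin 2) Fq)) = {g : GL (Fin 2) Fq | ∃ m m' : Fqˣ,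
      (g : Matrix (Fin 2) (Fin 2) Fq) = !![(m : Fq), 0; 0, (m' : Fq)]})
    (γ : Fq → GL (Fin 2) Fq)
    (hγ : ∀ y : Fq, ((γ y : Matrix (Fin 2) (Fin 2) Fq)) = !![1, y; 0, 1]) :
    Function.Bijective (fun y : Fq =>
      (⟨{x | ∃ h ∈ H, ∃ t ∈ T₁, x = h * γ y * t},
        ⟨γ y, rfl⟩⟩ : {S : Set (GL (Fin 2) Fq) //
          ∃ g : GL (Fin 2) Fq, S = {x | ∃ h ∈ H, ∃ t ∈ T₁, x = h * g * t}})) := by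
  have hb : b ≠ 0 := fun hb => hab ⟨a, by simp [hb]⟩
  exact stmt_14_general (sq_ne_add_mul_of_not_exists_sq hα hb) hH hT₁ hγ
end

section
/- The set {C ∈ M₂(Fq) : trace(C·M(x,y)) = 0 for all x, y ∈ Fq} equals the set of all 2×2 matrices over Fq with rows (m, n·(a² − b²α) + 2a·m) and (n, −m), where m, n range over Fq. -/
/-!
With `N = !![0, -d; 1, t]`, the companion matrix of `X² - tX + d`, the matrices under consideration
are `x • 1 + y • N`. Hence `C` annihilates all of them under the trace form if and only if
`tr C = 0` and `tr (C * N) = 0`, two linear equations which determine the second column of `C` from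
its first column. The theorem is the case `t = 2a`, `d = a² - b²α`.
-/

section TraceForm

variable {ι R : Type*} [Fintype ι] [CommSemiring R]

theorem forall_trace_mul_smul_add_smul_eq_zero_iff (C A B : Matrix ι ι R) :
    (∀ x y : R, (C * (x • A + y • B)).trace = 0) ↔ (C * A).trace = 0 ∧ (C * B).trace = 0 := by
  constructor
  · intro h
    exact ⟨by simpa using h 1 0, by simpa using h 0 1⟩
  · rintro ⟨hA, hB⟩ x y
    simp [mul_add, hA, hB]

end TraceForm

section Companion

variable {R : Type*} [CommRing R] (t d : R)

theorem fin_two_eq_smul_one_add_smul_companion (x y : R) :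
    !![x, -d * y; y, x + t * y] = x • (1 : Matrix (Fin 2) (Fin 2) R) + y • !![0, -d; 1, t] := by
  simp [Matrix.one_fin_two, mul_comm]

theorem trace_mul_companion (C : Matrix (Fin 2) (Fin 2) R) :
    (C * !![0, -d; 1, t]).trace = C 0 1 + t * C 1 1 - d * C 1 0 := by
  simp only [Matrix.trace_fin_two, Matrix.mul_apply, Fin.sum_univ_two, Matrix.of_apply,
    Matrix.cons_val_zero, Matrix.cons_val_one]
  ring

theorem trace_eq_zero_and_trace_mul_companion_eq_zero_iff (C : Matrix (Fin 2) (Fin 2) R) :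
    C.trace = 0 ∧ (C * !![0, -d; 1, t]).trace = 0 ↔
      ∃ m n : R, C = !![m, n * d + t * m; n, -m] := by
  rw [trace_mul_companion, Matrix.trace_fin_two]
  constructor
  · rintro ⟨trace_zero, trace_mul_zero⟩
    have h11 : C 1 1 = -C 0 0 := by linear_combination trace_zero
    have h01 : C 0 1 = C 1 0 * d + t * C 0 0 := by
      linear_combination trace_mul_zero - t * trace_zero
    refine ⟨C 0 0, C 1 0, ?_⟩
    rw [← h01, ← h11]
    exact C.eta_fin_two
  · rintro ⟨m, n, rfl⟩
    simp [mul_comm]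

theorem stmt_16_general :
    {C : Matrix (Fin 2) (Fin 2) R | ∀ x y : R, (C * !![x, -d * y; y, x + t * y]).trace = 0} =
      {D : Matrix (Fin 2) (Fin 2) R | ∃ m n : R, D = !![m, n * d + t * m; n, -m]} := by
  ext C
  simp only [Set.mem_ofPred_eq, fin_two_eq_smul_one_add_smul_companion,
    forall_trace_mul_smul_add_smul_eq_zero_iff, mul_one,
    trace_eq_zero_and_trace_mul_companion_eq_zero_iff]

end Companion

/-- The set `{C ∈ M₂(Fq) : tr(C·M(x,y)) = 0 for all x, y}` equals the set of matrices
`!![m, n·(a² − b²α) + 2a·m; n, −m]` for `m, n ∈ Fq`. -/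
theorem stmt_16 (q : ℕ) (hodd : Odd q) (Fq : Type*) [Field Fq] [Fintype Fq]
    (hq : Fintype.card Fq = q) (a b α : Fq) :
    {C : Matrix (Fin 2) (Fin 2) Fq |
        ∀ x y : Fq, Matrix.trace (C * !![x, -(a ^ 2 - b ^ 2 * α) * y; y, x + 2 * a * y]) = 0} =
      {D : Matrix (Fin 2) (Fin 2) Fq |
        ∃ m n : Fq, D = !![m, n * (a ^ 2 - b ^ 2 * α) + 2 * a * m; n, -m]} :=
  stmt_16_general (2 * a) (a ^ 2 - b ^ 2 * α)
end

section
/- Let a₀, a₁, m, n ∈ Fq, let X₁ = M(a₀, a₁), let D be the 2×2 matrix over Fq with rows (m, n·(a² − b²α) + 2a·m) and (n, −m), and set B = 2·X₁ − D. If a₁ ≠ 0, then B is not a scalar matrix, i.e. B ≠ λ·I for every λ ∈ Fq (so B is a regular element of M₂(Fq)). -/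
/-!
Write `d = a² - b²α` and let `T = M(-a, 1)`, which has trace zero and satisfies `T² = (a² - d)·I`.
The functional `Y ↦ tr (Y * T)` kills all scalar matrices. It also kills `D`, while
`M(x, y) = (x + ay)·I + y·T` is sent to `2y(a² - d)`. Hence `B = 2X₁ - D` is sent to `4a₁(a² - d)`.
This is nonzero: `2 ≠ 0` in odd characteristic, and `d`, not being a square, differs from `a²`.
-/

theorem two_ne_zero_of_odd_card {R : Type*} [Ring R] [Nontrivial R] [Fintype R]
    (hodd : Odd (Fintype.card R)) : (2 : R) ≠ 0 := by
  intro two_eq_zero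
  obtain ⟨k, hk⟩ := hodd
  have card_eq_zero : (Fintype.card R : R) = 0 := Nat.cast_card_eq_zero R
  rw [hk] at card_eq_zero
  simp [two_eq_zero] at card_eq_zero

theorem ne_smul_one_of_trace_mul_ne_zero {ι R : Type*} [Fintype ι] [DecidableEq ι] [Semiring R]
    {A T : Matrix ι ι R} (hT : T.trace = 0) (hAT : (A * T).trace ≠ 0) (c : R) :
    A ≠ c • (1 : Matrix ι ι R) := by
  rintro rfl
  exact hAT (by rw [smul_one_mul, Matrix.trace_smul, hT, smul_zero])

section TraceForm

variable {R : Type*} [CommRing R] (a d : R)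

/-- The matrix `M(x, y)`, with `d` in place of `a² - b²α`: it is `x·I + y·C` for the companion
matrix `C` of `X² - 2aX + d`. -/
def companionCombination (x y : R) : Matrix (Fin 2) (Fin 2) R :=
  !![x, -d * y; y, x + 2 * a * y]

/-- The matrix `T = C - a·I`, a trace-zero translate of the companion matrix `C` of
`X² - 2aX + d`. It is the element against which the trace form is evaluated. -/
def tracelessCompanion : Matrix (Fin 2) (Fin 2) R :=
  !![-a, -d; 1, a]

/-- The matrix `D`, with `d` in place of `a² - b²α`: the trace-zero matrix with first column
`(m, n)` that anticommutes with `tracelessCompanion a d`. -/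
def anticommutingMatrix (m n : R) : Matrix (Fin 2) (Fin 2) R :=
  !![m, n * d + 2 * a * m; n, -m]

theorem trace_tracelessCompanion : (tracelessCompanion a d).trace = 0 := by
  simp [tracelessCompanion]

theorem trace_companionCombination_mul_tracelessCompanion (x y : R) :
    (companionCombination a d x y * tracelessCompanion a d).trace = 2 * y * (a ^ 2 - d) := by
  rw [companionCombination, tracelessCompanion, Matrix.mul_fin_two, Matrix.trace_fin_two_of]
  ring

theorem trace_anticommutingMatrix_mul_tracelessCompanion (m n : R) :
    (anticommutingMatrix a d m n * tracelessCompanion a d).trace = 0 := by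
  rw [anticommutingMatrix, tracelessCompanion, Matrix.mul_fin_two, Matrix.trace_fin_two_of]
  ring

theorem trace_two_nsmul_sub_mul_tracelessCompanion (x y m n : R) :
    ((2 • companionCombination a d x y - anticommutingMatrix a d m n) *
      tracelessCompanion a d).trace = 2 * (2 * y * (a ^ 2 - d)) := by
  rw [sub_mul, smul_mul_assoc, Matrix.trace_sub, Matrix.trace_smul,
    trace_companionCombination_mul_tracelessCompanion,
    trace_anticommutingMatrix_mul_tracelessCompanion, sub_zero, nsmul_eq_mul, Nat.cast_ofNat]

end TraceForm

theorem stmt_18_general {R : Type*} [CommRing R] [NoZeroDivisors R] (htwo : (2 : R) ≠ 0)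
    {a d : R} (hd : d ≠ a ^ 2) (a₀ : R) {a₁ : R} (ha₁ : a₁ ≠ 0) (m n lam : R) :
    2 • companionCombination a d a₀ a₁ - anticommutingMatrix a d m n ≠
      lam • (1 : Matrix (Fin 2) (Fin 2) R) := by
  apply ne_smul_one_of_trace_mul_ne_zero (trace_tracelessCompanion a d)
  rw [trace_two_nsmul_sub_mul_tracelessCompanion]
  exact mul_ne_zero htwo (mul_ne_zero (mul_ne_zero htwo ha₁) (sub_ne_zero.mpr hd.symm))

/-- With `X₁ = M(a₀, a₁)`, `D = !![m, n(a² − b²α) + 2am; n, −m]` and `B = 2·X₁ − D`, if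
`a₁ ≠ 0` then `B` is not a scalar matrix. -/
theorem stmt_18 (q : ℕ) (hodd : Odd q) (Fq : Type*) [Field Fq] [Fintype Fq]
    (hq : Fintype.card Fq = q)
    (a b α : Fq) (hα : ¬∃ x : Fq, x ^ 2 = α)
    (hab : ¬∃ x : Fq, x ^ 2 = a ^ 2 - b ^ 2 * α)
    (a₀ a₁ m n : Fq) (ha₁ : a₁ ≠ 0) :
    ∀ lam : Fq,
      2 • !![a₀, -(a ^ 2 - b ^ 2 * α) * a₁; a₁, a₀ + 2 * a * a₁] -
          !![m, n * (a ^ 2 - b ^ 2 * α) + 2 * a * m; n, -m] ≠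
        lam • (1 : Matrix (Fin 2) (Fin 2) Fq) := by
  subst hq
  exact stmt_18_general (two_ne_zero_of_odd_card hodd) (fun h => hab ⟨a, h.symm⟩) a₀ ha₁ m n
end
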